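/- arXiv:2510.18641 — 2 statements merged into one kernel-verified Lean document; each statement's English description precedes it below -/
import Mathlib

section
/- Let N ≥ 1 and let 0 < α_1 < α_2 < … < α_N be real numbers, none of which is a positive integer, such that α_k − α_j is not an integer whenever j ≠ k. Let a > 0 be a real number and ℓ ∈ ℕ ∪ {0}. Suppose f_1, …, f_N : (0,∞) → ℂ are C^∞ functions and there exist constants c, δ > 0 such that for every k one has |f_k(τ)| ≤ c e^{−δτ} for all τ ∈ (a,∞) and |f_k(τ)| ≤ c e^{−δ/τ} for all τ ∈ (0,a]. If Σ_{k=1}^N Γ(m+1+α_k) ∫_0^∞ f_k(τ) τ^{−m} dτ = 0 for every integer m with m ≥ ℓ, then f_k(τ) = 0 for all τ ∈ (0,∞) and all k = 1,…,N. -/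
open MeasureTheory Real Set

lemma aux_rpow_le (p d : ℝ) (hp : 0 ≤ p) (hd : 0 < d) :
    ∃ K : ℝ, 0 ≤ K ∧ ∀ x : ℝ, 0 ≤ x → x ^ p ≤ K * Real.exp (d * x) := by
  set n := ⌈p⌉₊ with hn
  refine ⟨1 + n.factorial / d ^ n, by positivity, fun x hx => ?_⟩
  have h1 : x ^ p ≤ 1 + x ^ n := by
    rcases le_total x 1 with h | h
    · have := Real.rpow_le_one hx h hp
      have : 0 ≤ x ^ n := by positivity
      linarith
    · have : x ^ p ≤ x ^ (n : ℝ) := Real.rpow_le_rpow_of_exponent_le h (Nat.le_ceil p)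
      rw [Real.rpow_natCast] at this
      linarith
  have h2 : x ^ n ≤ n.factorial / d ^ n * Real.exp (d * x) := by
    have := Real.pow_div_factorial_le_exp (d * x) (by positivity) n
    rw [mul_pow, div_le_iff₀ (by positivity)] at this
    rw [div_mul_eq_mul_div, le_div_iff₀ (by positivity)]
    linarith
  have h3 : (1 : ℝ) ≤ Real.exp (d * x) := Real.one_le_exp (by positivity)
  linarith

lemma aux_rpow_le' (p d : ℝ) (hd : 0 < d) :
    ∃ K : ℝ, 0 ≤ K ∧ ∀ x : ℝ, 0 < x → x ^ p ≤ K * Real.exp (d * x + d / x) := by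
  rcases le_total 0 p with hp | hp
  · obtain ⟨K, hK, h⟩ := aux_rpow_le p d hp hd
    refine ⟨K, hK, fun x hx => (h x hx.le).trans ?_⟩
    have : 0 ≤ d / x := by positivity
    gcongr
    linarith
  · obtain ⟨K, hK, h⟩ := aux_rpow_le (-p) d (by linarith) hd
    refine ⟨K, hK, fun x hx => ?_⟩
    have h1 := h x⁻¹ (by positivity)
    rw [Real.inv_rpow hx.le, Real.rpow_neg hx.le, inv_inv] at h1
    refine h1.trans ?_
    have : 0 ≤ d * x := by positivity
    gcongr
    rw [div_eq_mul_inv]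
    linarith

lemma aux_integrable_exp_abs (c : ℝ) (hc : 0 < c) :
    Integrable (fun x : ℝ => Real.exp (-c * |x|)) := by
  have h := integrableOn_rpow_mul_exp_neg_mul_rpow (p := 1) (s := 0) (b := c) (by norm_num)
    (by norm_num) hc
  simp only [Real.rpow_zero, Real.rpow_one, one_mul] at h
  have hp : IntegrableOn (fun x : ℝ => Real.exp (-c * |x|)) (Ioi 0) :=
    h.congr_fun (fun x hx => by simp only [abs_of_pos (mem_Ioi.mp hx)]) measurableSet_Ioi
  have h2 : IntegrableOn (fun x : ℝ => Real.exp (-c * |x|)) (Ici (-0)) := by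
    rw [neg_zero]
    exact Iff.mpr integrableOn_Ici_iff_integrableOn_Ioi hp
  have h3 := h2.comp_neg_Iic
  simp only [abs_neg] at h3
  rw [← integrableOn_univ, ← Iic_union_Ioi (a := (0 : ℝ))]
  exact h3.union hp

lemma aux_integrable_pow (n : ℕ) (c : ℝ) (hc : 0 < c) :
    Integrable (fun x : ℝ => |x| ^ n * Real.exp (-c * |x|)) := by
  obtain ⟨K, hK, h⟩ := aux_rpow_le n (c / 2) (by positivity) (by positivity)
  refine Integrable.mono' ((aux_integrable_exp_abs (c / 2) (by positivity)).const_mul K)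
    (by fun_prop) (Filter.Eventually.of_forall fun x => ?_)
  rw [Real.norm_of_nonneg (by positivity)]
  have h1 := h |x| (abs_nonneg x)
  rw [Real.rpow_natCast] at h1
  calc |x| ^ n * Real.exp (-c * |x|) ≤ K * Real.exp (c / 2 * |x|) * Real.exp (-c * |x|) := by
        gcongr
    _ = K * Real.exp (-(c / 2) * |x|) := by
        rw [mul_assoc, ← Real.exp_add]; congr 2; ring

lemma aux_shift (c C h : ℝ) (hc : 0 < c) (hh : |h| ≤ c / 2)
    (φ : ℝ → ℂ) (hm : AEStronglyMeasurable φ) (hb : ∀ x, ‖φ x‖ ≤ C * Real.exp (-c * |x|))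
    (h0 : ∀ n : ℕ, ∫ x : ℝ, (x : ℂ) ^ n * φ x = 0) (n : ℕ) :
    ∫ x : ℝ, (x : ℂ) ^ n * (Complex.exp (h * x * Complex.I) * φ x) = 0 := by
  have key := hasSum_integral_of_dominated_convergence (μ := (volume : Measure ℝ))
    (F := fun (j : ℕ) (x : ℝ) => (h * x * Complex.I) ^ j / j.factorial * ((x : ℂ) ^ n * φ x))
    (f := fun x : ℝ => (x : ℂ) ^ n * (Complex.exp (h * x * Complex.I) * φ x))
    (fun (j : ℕ) (x : ℝ) => |h * x| ^ j / j.factorial * (|x| ^ n * (C * Real.exp (-c * |x|))))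
    ?_ ?_ ?_ ?_ ?_
  · have hz : ∀ j : ℕ, ∫ x : ℝ, (h * x * Complex.I) ^ j / j.factorial * ((x : ℂ) ^ n * φ x)
        = 0 := by
      intro j
      have : ∀ x : ℝ, (h * x * Complex.I) ^ j / j.factorial * ((x : ℂ) ^ n * φ x)
          = ((h * Complex.I) ^ j / j.factorial) * ((x : ℂ) ^ (j + n) * φ x) := by
        intro x; rw [pow_add]; ring
      simp_rw [this]
      rw [integral_const_mul, h0, mul_zero]
    simp_rw [hz] at key
    exact (hasSum_zero.unique key).symm
  · intro j
    have : Continuous (fun x : ℝ => (h * x * Complex.I) ^ j / (j.factorial : ℂ)) := by fun_prop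
    have h2 : Continuous (fun x : ℝ => (x : ℂ) ^ n) := by fun_prop
    exact this.aestronglyMeasurable.mul (h2.aestronglyMeasurable.mul hm)
  · intro j
    refine Filter.Eventually.of_forall fun x => ?_
    simp only [norm_mul, norm_div, norm_pow, Complex.norm_I, mul_one, Complex.norm_real,
      Complex.norm_natCast, Real.norm_eq_abs, abs_mul]
    gcongr
    exact hb x
  · refine Filter.Eventually.of_forall fun x => ?_
    exact (Real.summable_pow_div_factorial _).mul_right _
  · have hs : ∀ x : ℝ, ∑' j : ℕ, |h * x| ^ j / j.factorial *
        (|x| ^ n * (C * Real.exp (-c * |x|)))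
        = Real.exp |h * x| * (|x| ^ n * (C * Real.exp (-c * |x|))) := by
      intro x
      rw [tsum_mul_right, Real.exp_eq_exp_ℝ, NormedSpace.exp_eq_tsum_div]
    simp_rw [hs]
    refine Integrable.mono' ((aux_integrable_pow n (c / 2) (by positivity)).const_mul |C|)
      (by fun_prop) (Filter.Eventually.of_forall fun x => ?_)
    rw [norm_mul, norm_mul, norm_mul, norm_pow]
    simp only [Real.norm_eq_abs, abs_abs, Real.abs_exp, abs_mul]
    have : Real.exp (|h| * |x|) ≤ Real.exp (c / 2 * |x|) := by gcongr
    calc _ ≤ Real.exp (c / 2 * |x|) * (|x| ^ n * (|C| * Real.exp (-c * |x|))) := by gcongr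
      _ = |C| * (|x| ^ n * (Real.exp (c / 2 * |x|) * Real.exp (-c * |x|))) := by ring
      _ = _ := by rw [← Real.exp_add]; congr 3; ring
  · refine Filter.Eventually.of_forall fun x => ?_
    have := (NormedSpace.expSeries_div_hasSum_exp (h * x * Complex.I)).mul_right
      ((x : ℂ) ^ n * φ x)
    rw [← Complex.exp_eq_exp_ℂ] at this
    rw [show (x : ℂ) ^ n * (Complex.exp (h * x * Complex.I) * φ x) =
      Complex.exp (h * x * Complex.I) * ((x : ℂ) ^ n * φ x) by ring]
    exact this

lemma aux_shift_iter (c C h : ℝ) (hc : 0 < c) (hh : |h| ≤ c / 2)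
    (φ : ℝ → ℂ) (hm : AEStronglyMeasurable φ) (hb : ∀ x, ‖φ x‖ ≤ C * Real.exp (-c * |x|))
    (h0 : ∀ n : ℕ, ∫ x : ℝ, (x : ℂ) ^ n * φ x = 0) (M : ℕ) :
    ∀ n : ℕ, ∫ x : ℝ, (x : ℂ) ^ n * (Complex.exp (((M * h : ℝ) : ℂ) * x * Complex.I) * φ x)
      = 0 := by
  induction M with
  | zero => simpa using h0
  | succ M ih =>
    intro n
    have hcont : Continuous (fun x : ℝ => Complex.exp (((M * h : ℝ) : ℂ) * x * Complex.I)) := by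
      fun_prop
    have := aux_shift c C h hc hh
      (fun x => Complex.exp (((M * h : ℝ) : ℂ) * x * Complex.I) * φ x)
      (hcont.aestronglyMeasurable.mul hm) (fun x => by
        rw [norm_mul, ← Complex.ofReal_mul, Complex.norm_exp_ofReal_mul_I, one_mul]
        exact hb x) ih n
    rw [← this]
    congr 1
    funext x
    rw [← mul_assoc (Complex.exp _) (Complex.exp _), ← Complex.exp_add]
    congr 3
    push_cast
    ring

lemma aux_moment (c C : ℝ) (hc : 0 < c)
    (φ : ℝ → ℂ) (hm : AEStronglyMeasurable φ) (hb : ∀ x, ‖φ x‖ ≤ C * Real.exp (-c * |x|))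
    (h0 : ∀ n : ℕ, ∫ x : ℝ, (x : ℂ) ^ n * φ x = 0) (y : ℝ) (hy : ContinuousAt φ y) :
    φ y = 0 := by
  have hF : FourierTransform.fourier φ = (0 : ℝ → ℂ) := by
    funext w
    rw [Real.fourier_real_eq_integral_exp_smul]
    obtain ⟨M, hM⟩ := exists_nat_gt (|(-2 * π * w)| / (c / 2))
    have hM0 : (0 : ℝ) < M := lt_of_le_of_lt (by positivity) hM
    have := aux_shift_iter c C ((-2 * π * w) / M) hc (by
      rw [abs_div, abs_of_pos hM0, div_le_iff₀ hM0]
      rw [div_lt_iff₀ (by positivity)] at hM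
      linarith) φ hm hb h0 M 0
    rw [mul_div_cancel₀ _ hM0.ne'] at this
    simp only [pow_zero, one_mul] at this
    rw [Pi.zero_apply, ← this]
    congr 1
    funext x
    rw [smul_eq_mul]
    congr 2
    push_cast
    ring
  have hi : Integrable φ := Integrable.mono' ((aux_integrable_exp_abs c hc).const_mul C) hm
    (Filter.Eventually.of_forall hb)
  have := hi.fourierInv_fourier_eq (by rw [hF]; exact integrable_zero _ _ _) hy
  rw [← this, hF, Real.fourierInv_eq']
  simp

/-- The Laplace transform on the positive half-line. -/
noncomputable def auxLap (g : ℝ → ℂ) (u : ℝ) : ℂ :=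
  ∫ τ in Ioi (0 : ℝ), g τ * ((Real.exp (-u * τ) : ℝ) : ℂ)

lemma aux_mul_rpow (C d p : ℝ) (hd : 0 < d) (f : ℝ → ℂ)
    (hb : ∀ τ, 0 < τ → ‖f τ‖ ≤ C * Real.exp (-d * τ - d / τ)) :
    ∃ C' : ℝ, ∀ τ, 0 < τ → ‖f τ * ((τ ^ p : ℝ) : ℂ)‖ ≤
      C' * Real.exp (-(d / 2) * τ - (d / 2) / τ) := by
  obtain ⟨K, hK, h⟩ := aux_rpow_le' p (d / 2) (by positivity)
  refine ⟨C * K, fun τ hτ => ?_⟩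
  rw [norm_mul, Complex.norm_real, Real.norm_of_nonneg (by positivity)]
  have h1 := hb τ hτ
  have h2 := h τ hτ
  calc ‖f τ‖ * τ ^ p ≤ (C * Real.exp (-d * τ - d / τ)) *
        (K * Real.exp (d / 2 * τ + d / 2 / τ)) := by
        gcongr
        exact (norm_nonneg _).trans h1
    _ = C * K * (Real.exp (-d * τ - d / τ) * Real.exp (d / 2 * τ + d / 2 / τ)) := by ring
    _ = _ := by rw [← Real.exp_add]; congr 2; ring

lemma aux_contOn (g : ℝ → ℂ) (hg : ContinuousOn g (Ioi 0)) (p : ℝ) :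
    ContinuousOn (fun τ : ℝ => g τ * ((τ ^ p : ℝ) : ℂ)) (Ioi 0) := by
  refine hg.mul (Complex.continuous_ofReal.comp_continuousOn ?_)
  exact fun τ hτ => (Real.continuousAt_rpow_const _ _ (Or.inl (ne_of_gt hτ))).continuousWithinAt

lemma aux_exp_integrableOn (d : ℝ) (hd : 0 < d) :
    IntegrableOn (fun τ : ℝ => Real.exp (-d * τ)) (Ioi 0) := by
  have h := integrableOn_rpow_mul_exp_neg_mul_rpow (p := 1) (s := 0) (b := d) (by norm_num)
    (by norm_num) hd
  simpa only [Real.rpow_zero, Real.rpow_one, one_mul] using h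

lemma aux_meas (g : ℝ → ℂ) (hg : ContinuousOn g (Ioi 0)) :
    AEStronglyMeasurable g (volume.restrict (Ioi 0)) :=
  hg.aestronglyMeasurable measurableSet_Ioi

lemma aux_C_nonneg (C d : ℝ) (g : ℝ → ℂ)
    (hb : ∀ τ, 0 < τ → ‖g τ‖ ≤ C * Real.exp (-d * τ - d / τ)) : 0 ≤ C := by
  have := (norm_nonneg _).trans (hb 1 one_pos)
  exact nonneg_of_mul_nonneg_left this (Real.exp_pos _)

lemma aux_bound_exp (C d : ℝ) (hd : 0 < d) (g : ℝ → ℂ)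
    (hb : ∀ τ, 0 < τ → ‖g τ‖ ≤ C * Real.exp (-d * τ - d / τ)) :
    ∀ τ, 0 < τ → ‖g τ‖ ≤ C * Real.exp (-d * τ) := by
  intro τ hτ
  have hC := aux_C_nonneg C d g hb
  refine (hb τ hτ).trans ?_
  have : 0 ≤ d / τ := by positivity
  gcongr
  linarith

lemma aux_integrableOn (C d : ℝ) (hd : 0 < d) (g : ℝ → ℂ) (hg : ContinuousOn g (Ioi 0))
    (hb : ∀ τ, 0 < τ → ‖g τ‖ ≤ C * Real.exp (-d * τ - d / τ)) :
    IntegrableOn g (Ioi 0) := by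
  refine Integrable.mono' ((aux_exp_integrableOn d hd).const_mul C) (aux_meas g hg) ?_
  filter_upwards [ae_restrict_mem measurableSet_Ioi] with τ hτ
  exact aux_bound_exp C d hd g hb τ hτ

lemma aux_lap_cont (C d : ℝ) (hd : 0 < d) (g : ℝ → ℂ) (hg : ContinuousOn g (Ioi 0))
    (hb : ∀ τ, 0 < τ → ‖g τ‖ ≤ C * Real.exp (-d * τ - d / τ)) :
    Continuous (fun v : ℝ => auxLap g (v ^ 2)) := by
  unfold auxLap
  refine continuous_of_dominated (bound := fun τ => ‖g τ‖) ?_ ?_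
    (aux_integrableOn C d hd g hg hb).norm ?_
  · intro v
    refine (aux_meas g hg).mul (Continuous.aestronglyMeasurable ?_)
    fun_prop
  · intro v
    filter_upwards [ae_restrict_mem measurableSet_Ioi] with τ hτ
    have hτ' : 0 < τ := hτ
    rw [norm_mul, Complex.norm_real, Real.norm_of_nonneg (by positivity)]
    refine mul_le_of_le_one_right (norm_nonneg _) (Real.exp_le_one_iff.mpr ?_)
    have : 0 ≤ v ^ 2 * τ := by positivity
    linarith
  · refine Filter.Eventually.of_forall fun τ => ?_
    fun_prop

lemma aux_lap_bound (C d : ℝ) (hd : 0 < d) (g : ℝ → ℂ) (hg : ContinuousOn g (Ioi 0))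
    (hb : ∀ τ, 0 < τ → ‖g τ‖ ≤ C * Real.exp (-d * τ - d / τ)) :
    ∃ K : ℝ, 0 ≤ K ∧ ∀ v : ℝ, ‖auxLap g (v ^ 2)‖ ≤ K * Real.exp (-(2 * √d) * |v|) := by
  have hC := aux_C_nonneg C d g hb
  refine ⟨C * ∫ τ in Ioi (0 : ℝ), Real.exp (-d * τ),
    mul_nonneg hC (integral_nonneg fun τ => (Real.exp_pos _).le), fun v => ?_⟩
  rw [mul_right_comm, ← integral_const_mul]
  unfold auxLap
  refine norm_integral_le_of_norm_le ((aux_exp_integrableOn d hd).const_mul _) ?_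
  filter_upwards [ae_restrict_mem measurableSet_Ioi] with τ hτ
  have hτ' : 0 < τ := hτ
  rw [norm_mul, Complex.norm_real, Real.norm_of_nonneg (by positivity)]
  calc ‖g τ‖ * Real.exp (-v ^ 2 * τ) ≤ (C * Real.exp (-d * τ - d / τ)) * Real.exp (-v ^ 2 * τ) := by
        gcongr
        exact hb τ hτ'
    _ = C * Real.exp (-d * τ - d / τ + -v ^ 2 * τ) := by rw [mul_assoc, ← Real.exp_add]
    _ ≤ C * Real.exp (-(2 * √d) * |v| - d * τ) := by
        have h1 : 0 ≤ (√d - |v| * τ) ^ 2 / τ := by positivity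
        have h2 : (√d - |v| * τ) ^ 2 / τ = d / τ - 2 * √d * |v| + v ^ 2 * τ := by
          have := Real.sq_sqrt hd.le
          have h3 := sq_abs v
          field_simp
          rw [← h3]
          nlinarith
        refine mul_le_mul_of_nonneg_left (Real.exp_le_exp.mpr ?_) hC
        linarith
    _ = _ := by rw [sub_eq_add_neg, ← neg_mul, Real.exp_add]; ring

lemma aux_fubini (C d q : ℝ) (hd : 0 < d) (hq : -1 < q) (g : ℝ → ℂ)
    (hg : ContinuousOn g (Ioi 0))
    (hb : ∀ τ, 0 < τ → ‖g τ‖ ≤ C * Real.exp (-d * τ - d / τ)) :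
    ∫ v in Ioi (0 : ℝ), ((v ^ q : ℝ) : ℂ) * auxLap g (v ^ 2) =
      ((1 / 2 * Real.Gamma ((q + 1) / 2) : ℝ) : ℂ) *
        ∫ τ in Ioi (0 : ℝ), g τ * ((τ ^ (-(q + 1) / 2) : ℝ) : ℂ) := by
  unfold auxLap
  have hint : ∀ τ : ℝ, 0 < τ → IntegrableOn (fun v : ℝ => v ^ q * Real.exp (-v ^ 2 * τ)) (Ioi 0) := by
    intro τ hτ
    have := integrableOn_rpow_mul_exp_neg_mul_rpow (p := 2) (s := q) (b := τ) hq two_pos hτ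
    refine this.congr_fun (fun v hv => ?_) measurableSet_Ioi
    simp only [Real.rpow_two]
    congr 2; ring
  have hval : ∀ τ : ℝ, 0 < τ → ∫ v in Ioi (0 : ℝ), v ^ q * Real.exp (-v ^ 2 * τ) =
      τ ^ (-(q + 1) / 2) * (1 / 2) * Real.Gamma ((q + 1) / 2) := by
    intro τ hτ
    rw [← integral_rpow_mul_exp_neg_mul_rpow two_pos hq hτ]
    refine setIntegral_congr_fun measurableSet_Ioi (fun v hv => ?_)
    simp only [Real.rpow_two]
    congr 2; ring
  simp_rw [← integral_const_mul]
  rw [integral_integral_swap]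
  · refine setIntegral_congr_fun measurableSet_Ioi (fun τ hτ => ?_)
    have h1 : ∀ v : ℝ, ((v ^ q : ℝ) : ℂ) * (g τ * ((Real.exp (-v ^ 2 * τ) : ℝ) : ℂ)) =
        g τ * ((v ^ q * Real.exp (-v ^ 2 * τ) : ℝ) : ℂ) := by
      intro v; push_cast; ring
    simp only [h1]
    rw [integral_const_mul, integral_complex_ofReal, hval τ hτ]
    push_cast
    ring
  · rw [integrable_prod_iff']
    · constructor
      · filter_upwards [ae_restrict_mem measurableSet_Ioi] with τ hτ
        have : Integrable (fun v : ℝ => g τ * ((v ^ q * Real.exp (-v ^ 2 * τ) : ℝ) : ℂ))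
            (volume.restrict (Ioi 0)) :=
          Integrable.const_mul (f := fun v : ℝ => ((v ^ q * Real.exp (-v ^ 2 * τ) : ℝ) : ℂ))
            (hint τ hτ).ofReal (g τ)
        refine this.congr (Filter.Eventually.of_forall fun v => ?_)
        simp only [Function.uncurry, Complex.ofReal_mul]
        ring
      · obtain ⟨C', hC'⟩ := aux_mul_rpow C d (-(q + 1) / 2) hd g hb
        have hi := aux_integrableOn C' (d / 2) (by positivity) _ (aux_contOn g hg _) hC'
        refine (hi.norm.mul_const (1 / 2 * Real.Gamma ((q + 1) / 2))).congr ?_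
        filter_upwards [ae_restrict_mem measurableSet_Ioi] with τ hτ
        have hτ' : 0 < τ := hτ
        have h1 : ∫ v in Ioi (0 : ℝ), ‖((v ^ q : ℝ) : ℂ) * (g τ * ((Real.exp (-v ^ 2 * τ) : ℝ) : ℂ))‖
            = ∫ v in Ioi (0 : ℝ), ‖g τ‖ * (v ^ q * Real.exp (-v ^ 2 * τ)) := by
          refine setIntegral_congr_fun measurableSet_Ioi (fun v hv => ?_)
          have hv' : 0 < v := hv
          simp only [norm_mul, Complex.norm_real]
          rw [Real.norm_of_nonneg (by positivity), Real.norm_of_nonneg (by positivity)]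
          ring
        simp only [Function.uncurry]
        rw [h1, integral_const_mul, hval τ hτ, norm_mul, Complex.norm_real,
          Real.norm_of_nonneg (by positivity)]
        ring
    · simp only [Function.uncurry_def]
      refine AEStronglyMeasurable.mul ?_ (AEStronglyMeasurable.mul ?_ ?_)
      · exact (by fun_prop : Measurable fun x : ℝ × ℝ => ((x.1 ^ q : ℝ) : ℂ)).aestronglyMeasurable
      · exact (aux_meas g hg).comp_snd
      · exact (by fun_prop : Measurable fun x : ℝ × ℝ =>
          ((Real.exp (-x.1 ^ 2 * x.2) : ℝ) : ℂ)).aestronglyMeasurable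

lemma aux_moment_pos (C d : ℝ) (hd : 0 < d) (g : ℝ → ℂ) (hg : ContinuousOn g (Ioi 0))
    (hb : ∀ τ, 0 < τ → ‖g τ‖ ≤ C * Real.exp (-d * τ - d / τ))
    (h0 : ∀ n : ℕ, ∫ τ in Ioi (0 : ℝ), (τ : ℂ) ^ n * g τ = 0) :
    ∀ τ, 0 < τ → g τ = 0 := by
  intro τ hτ
  have hC := aux_C_nonneg C d g hb
  have hev : (Ioi (0 : ℝ)).indicator g =ᶠ[nhds τ] g := by
    filter_upwards [Ioi_mem_nhds hτ] with x hx
    exact indicator_of_mem hx g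
  have h := aux_moment d C hd ((Ioi (0 : ℝ)).indicator g)
    ((aestronglyMeasurable_indicator_iff measurableSet_Ioi).mpr (aux_meas g hg)) ?_ ?_ τ ?_
  · rwa [indicator_of_mem (mem_Ioi.mpr hτ)] at h
  · intro x
    by_cases hx : 0 < x
    · rw [indicator_of_mem (mem_Ioi.mpr hx), abs_of_pos hx]
      exact aux_bound_exp C d hd g hb x hx
    · rw [indicator_of_notMem (by simpa using hx), norm_zero]
      positivity
  · intro n
    rw [← h0 n, ← integral_indicator measurableSet_Ioi]
    congr 1
    funext x
    by_cases hx : 0 < x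
    · rw [indicator_of_mem (mem_Ioi.mpr hx), indicator_of_mem (mem_Ioi.mpr hx)]
    · rw [indicator_of_notMem (by simpa using hx), indicator_of_notMem (by simpa using hx), mul_zero]
  · exact (hg.continuousAt (Ioi_mem_nhds hτ)).congr hev.symm

lemma aux_lap_asymp (C d : ℝ) (hd : 0 < d) (g : ℝ → ℂ) (hg : ContinuousOn g (Ioi 0))
    (hb : ∀ τ, 0 < τ → ‖g τ‖ ≤ C * Real.exp (-d * τ - d / τ)) (n : ℕ)
    (h0 : ∀ j < n, ∫ τ in Ioi (0 : ℝ), (τ : ℂ) ^ j * g τ = 0) :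
    ∃ K : ℝ, ∀ u : ℝ, 0 < u → u ≤ d / 2 →
      ‖auxLap g u - (-u : ℂ) ^ n / n.factorial * ∫ τ in Ioi (0 : ℝ), (τ : ℂ) ^ n * g τ‖
        ≤ K * u ^ (n + 1) := by
  have hC := aux_C_nonneg C d g hb
  have hpow : ∀ j : ℕ, IntegrableOn (fun τ : ℝ => (τ : ℂ) ^ j * g τ) (Ioi 0) := by
    intro j
    obtain ⟨C', hC'⟩ := aux_mul_rpow C d j hd g hb
    have hi := aux_integrableOn C' (d / 2) (by positivity) _ (aux_contOn g hg _) hC'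
    refine hi.congr_fun (fun τ hτ => ?_) measurableSet_Ioi
    simp only [Real.rpow_natCast]
    push_cast
    ring
  have hbi : IntegrableOn (fun τ : ℝ => C * (τ ^ (n + 1) * Real.exp (-(d / 2) * τ))) (Ioi 0) := by
    have h := integrableOn_rpow_mul_exp_neg_mul_rpow (p := 1) (s := ((n + 1 : ℕ) : ℝ)) (b := d / 2)
      (by push_cast; linarith [(Nat.cast_nonneg n : (0 : ℝ) ≤ n)]) (by norm_num) (by positivity)
    simp only [Real.rpow_natCast, Real.rpow_one] at h
    exact h.const_mul C
  refine ⟨∫ τ in Ioi (0 : ℝ), C * (τ ^ (n + 1) * Real.exp (-(d / 2) * τ)), fun u hu hud => ?_⟩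
  have hlapi : IntegrableOn (fun τ : ℝ => g τ * ((Real.exp (-u * τ) : ℝ) : ℂ)) (Ioi 0) := by
    refine (aux_integrableOn C d hd g hg hb).norm.mono' ?_ ?_
    · refine (aux_meas g hg).mul (Continuous.aestronglyMeasurable ?_)
      fun_prop
    · filter_upwards [ae_restrict_mem measurableSet_Ioi] with τ hτ
      have hτ' : 0 < τ := hτ
      rw [norm_mul, Complex.norm_real, Real.norm_of_nonneg (by positivity)]
      refine mul_le_of_le_one_right (norm_nonneg _) (Real.exp_le_one_iff.mpr ?_)
      have : 0 ≤ u * τ := by positivity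
      linarith
  have hsum : (-u : ℂ) ^ n / n.factorial * ∫ τ in Ioi (0 : ℝ), (τ : ℂ) ^ n * g τ =
      ∫ τ in Ioi (0 : ℝ), ∑ j ∈ Finset.range (n + 1),
        (-u : ℂ) ^ j / j.factorial * ((τ : ℂ) ^ j * g τ) := by
    rw [integral_finsetSum _ (fun j _ => (hpow j).const_mul _), Finset.sum_range_succ,
      Finset.sum_eq_zero, zero_add, integral_const_mul]
    intro j hj
    rw [integral_const_mul, h0 j (Finset.mem_range.mp hj), mul_zero]
  rw [hsum, auxLap, ← integral_sub hlapi
    (integrable_finsetSum _ (fun j _ => (hpow j).const_mul _)), ← integral_mul_const]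
  refine norm_integral_le_of_norm_le (hbi.mul_const _) ?_
  filter_upwards [ae_restrict_mem measurableSet_Ioi] with τ hτ
  have hτ' : 0 < τ := hτ
  have hrw : g τ * ((Real.exp (-u * τ) : ℝ) : ℂ) - ∑ j ∈ Finset.range (n + 1),
        (-u : ℂ) ^ j / j.factorial * ((τ : ℂ) ^ j * g τ) =
      g τ * (Complex.exp (-u * τ) - ∑ j ∈ Finset.range (n + 1), (-u * τ : ℂ) ^ j / j.factorial) := by
    rw [mul_sub, Finset.mul_sum]
    push_cast
    congr 1
    refine Finset.sum_congr rfl fun j _ => ?_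
    rw [mul_pow]
    ring
  rw [hrw, norm_mul]
  have h1 := Complex.norm_exp_sub_sum_le_norm_mul_exp (-u * τ : ℂ) (n + 1)
  have h2 : ‖(-u * τ : ℂ)‖ = u * τ := by
    rw [norm_mul, norm_neg, Complex.norm_real, Complex.norm_real, Real.norm_of_nonneg hu.le,
      Real.norm_of_nonneg hτ'.le]
  rw [h2] at h1
  have h3 := aux_bound_exp C d hd g hb τ hτ'
  calc _ ≤ (C * Real.exp (-d * τ)) * ((u * τ) ^ (n + 1) * Real.exp (u * τ)) := by gcongr
    _ ≤ (C * Real.exp (-d * τ)) * ((u * τ) ^ (n + 1) * Real.exp (d / 2 * τ)) := by gcongr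
    _ = C * (τ ^ (n + 1) * (Real.exp (-d * τ) * Real.exp (d / 2 * τ))) * u ^ (n + 1) := by ring
    _ = _ := by rw [← Real.exp_add]; congr 4; ring

lemma aux_even (F : ℝ → ℂ) (hF : Integrable F) (he : ∀ x, F (-x) = F x) :
    ∫ x, F x = 2 * ∫ x in Ioi (0 : ℝ), F x := by
  have h1 := integral_comp_neg_Iic 0 F
  simp only [he, neg_zero] at h1
  rw [← intervalIntegral.integral_Iic_add_Ioi (b := (0 : ℝ)) hF.integrableOn hF.integrableOn, h1]
  ring

lemma aux_odd (F : ℝ → ℂ) (ho : ∀ x, F (-x) = -F x) : ∫ x, F x = 0 := by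
  have h1 := integral_neg_eq_self F volume
  simp only [ho, integral_neg] at h1
  exact self_eq_neg.mp h1.symm

lemma aux_term_bound (C d p : ℝ) (hd : 0 < d) (hp : 0 ≤ p) (g : ℝ → ℂ)
    (hg : ContinuousOn g (Ioi 0))
    (hb : ∀ τ, 0 < τ → ‖g τ‖ ≤ C * Real.exp (-d * τ - d / τ)) :
    ∃ K : ℝ, ∀ v : ℝ, ‖((|v| ^ p : ℝ) : ℂ) * auxLap g (v ^ 2)‖ ≤ K * Real.exp (-√d * |v|) := by
  obtain ⟨K, hK, h⟩ := aux_lap_bound C d hd g hg hb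
  obtain ⟨K', hK', h'⟩ := aux_rpow_le p (√d) hp (Real.sqrt_pos.mpr hd)
  refine ⟨K' * K, fun v => ?_⟩
  rw [norm_mul, Complex.norm_real, Real.norm_of_nonneg (by positivity)]
  calc _ ≤ (K' * Real.exp (√d * |v|)) * (K * Real.exp (-(2 * √d) * |v|)) := by
        gcongr
        · exact h' _ (abs_nonneg v)
        · exact h v
    _ = K' * K * (Real.exp (√d * |v|) * Real.exp (-(2 * √d) * |v|)) := by ring
    _ = _ := by rw [← Real.exp_add]; congr 2; ring

lemma aux_term_cont (C d p : ℝ) (hd : 0 < d) (hp : 0 ≤ p) (g : ℝ → ℂ)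
    (hg : ContinuousOn g (Ioi 0))
    (hb : ∀ τ, 0 < τ → ‖g τ‖ ≤ C * Real.exp (-d * τ - d / τ)) :
    Continuous (fun v : ℝ => ((|v| ^ p : ℝ) : ℂ) * auxLap g (v ^ 2)) := by
  refine Continuous.mul (Complex.continuous_ofReal.comp ?_) (aux_lap_cont C d hd g hg hb)
  exact continuous_abs.rpow_const fun _ => Or.inr hp

lemma aux_pow_integrable (K r : ℝ) (hr : 0 < r) (φ : ℝ → ℂ) (hc : Continuous φ)
    (hb : ∀ v, ‖φ v‖ ≤ K * Real.exp (-r * |v|)) (n : ℕ) :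
    Integrable (fun v : ℝ => (v : ℂ) ^ n * φ v) := by
  refine Integrable.mono' ((aux_integrable_pow n r hr).const_mul K)
    (Continuous.aestronglyMeasurable (by fun_prop)) (Filter.Eventually.of_forall fun v => ?_)
  rw [norm_mul, norm_pow, Complex.norm_real, Real.norm_eq_abs]
  calc _ ≤ |v| ^ n * (K * Real.exp (-r * |v|)) := by gcongr; exact hb v
    _ = _ := by ring

lemma aux_sum_zero (N : ℕ) (α : Fin N → ℝ) (hpos : ∀ k, 0 < α k) (ℓ : ℕ) (d : ℝ) (hd : 0 < d)
    (C : Fin N → ℝ) (g : Fin N → ℝ → ℂ) (hg : ∀ k, ContinuousOn (g k) (Ioi 0))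
    (hb : ∀ k, ∀ τ, 0 < τ → ‖g k τ‖ ≤ C k * Real.exp (-d * τ - d / τ))
    (hvanish : ∀ m : ℕ, ℓ ≤ m →
      ∑ k, (Real.Gamma ((m : ℝ) + 1 + α k) : ℂ) *
        ∫ τ in Ioi (0 : ℝ), g k τ * ((τ ^ (-((m : ℝ) + 1 + α k)) : ℝ) : ℂ) = 0) :
    ∀ u : ℝ, 0 < u → ∑ k, ((u ^ α k : ℝ) : ℂ) * auxLap (g k) u = 0 := by
  have hp : ∀ k, 0 ≤ 2 * α k + 2 * ℓ + 1 := fun k => by have := hpos k; positivity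
  have hr : 0 < √d := Real.sqrt_pos.mpr hd
  choose K hK using fun k => aux_term_bound (C k) d _ hd (hp k) (g k) (hg k) (hb k)
  have hcont := fun k => aux_term_cont (C k) d _ hd (hp k) (g k) (hg k) (hb k)
  set T : Fin N → ℝ → ℂ := fun k v =>
    ((|v| ^ (2 * α k + 2 * ℓ + 1) : ℝ) : ℂ) * auxLap (g k) (v ^ 2) with hT
  have hTint : ∀ k n, Integrable (fun v : ℝ => (v : ℂ) ^ n * T k v) := fun k n =>
    aux_pow_integrable (K k) (√d) hr (T k) (hcont k) (hK k) n
  have hTeven : ∀ k v, T k (-v) = T k v := fun k v => by simp only [hT, abs_neg, neg_sq]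
  have hφcont : Continuous (fun v => ∑ k, T k v) := continuous_finsetSum _ fun k _ => hcont k
  have hmain : ∀ y : ℝ, ∑ k, T k y = 0 := by
    intro y
    refine aux_moment (√d) (∑ k, K k) hr (fun v => ∑ k, T k v) hφcont.aestronglyMeasurable
      ?_ ?_ y hφcont.continuousAt
    · intro v
      rw [Finset.sum_mul]
      exact (norm_sum_le _ _).trans (Finset.sum_le_sum fun k _ => hK k v)
    · intro n
      rcases Nat.even_or_odd n with hn | hn
      · obtain ⟨j, rfl⟩ := hn
        simp only [Finset.mul_sum]
        rw [integral_finsetSum _ fun k _ => hTint k _]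
        have hk : ∀ k, ∫ v : ℝ, (v : ℂ) ^ (j + j) * T k v =
            (Real.Gamma (((ℓ + j : ℕ) : ℝ) + 1 + α k) : ℂ) *
            ∫ τ in Ioi (0 : ℝ), g k τ * ((τ ^ (-(((ℓ + j : ℕ) : ℝ) + 1 + α k)) : ℝ) : ℂ) := by
          intro k
          rw [aux_even _ (hTint k _) (fun x => by
            rw [hTeven]; push_cast; rw [Even.neg_pow ⟨j, rfl⟩])]
          have hq : -1 < 2 * α k + 2 * ℓ + 1 + 2 * j := by 
            have := hp k
            have : (0 : ℝ) ≤ j := Nat.cast_nonneg j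
            linarith
          have hF := aux_fubini (C k) d (2 * α k + 2 * ℓ + 1 + 2 * j) hd hq (g k) (hg k) (hb k)
          have e1 : (2 * α k + 2 * ℓ + 1 + 2 * j + 1) / 2 = ((ℓ + j : ℕ) : ℝ) + 1 + α k := by
            push_cast; ring
          rw [neg_div, e1] at hF
          have e2 : ∫ v in Ioi (0 : ℝ), (v : ℂ) ^ (j + j) * T k v =
              ∫ v in Ioi (0 : ℝ), ((v ^ (2 * α k + 2 * ℓ + 1 + 2 * j) : ℝ) : ℂ) *
                auxLap (g k) (v ^ 2) := by
            refine setIntegral_congr_fun measurableSet_Ioi (fun v hv => ?_)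
            have hv' : 0 < v := hv
            simp only [hT]
            rw [abs_of_pos hv', Real.rpow_add hv' _ (2 * j),
              show (2 * j : ℝ) = ((j + j : ℕ) : ℝ) by push_cast; ring, Real.rpow_natCast]
            push_cast
            ring
          rw [e2, hF]
          push_cast
          ring
        simp only [hk]
        exact hvanish (ℓ + j) (Nat.le_add_right _ _)
      · refine aux_odd _ fun x => ?_
        simp only [hTeven]
        push_cast
        rw [hn.neg_pow, neg_mul]
  intro u hu
  have h := hmain (√u)
  have hs : 0 < √u := Real.sqrt_pos.mpr hu
  have h2 : ∀ k, T k (√u) = ((√u ^ (2 * ℓ + 1 : ℝ) : ℝ) : ℂ) *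
      (((u ^ α k : ℝ) : ℂ) * auxLap (g k) u) := by
    intro k
    simp only [hT]
    rw [Real.sq_sqrt hu.le, abs_of_pos hs, add_assoc, Real.rpow_add hs, Real.rpow_mul hs.le,
      Real.rpow_two, Real.sq_sqrt hu.le]
    push_cast
    ring
  simp only [h2, ← Finset.mul_sum] at h
  refine (mul_eq_zero.mp h).resolve_left ?_
  exact Complex.ofReal_ne_zero.mpr (Real.rpow_pos_of_pos hs _).ne'

lemma aux_decouple (N : ℕ) (α : Fin N → ℝ)
    (hdiff : ∀ j k : Fin N, j ≠ k → ∀ m : ℤ, α k - α j ≠ m)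
    (G : Fin N → ℝ → ℂ) (S : Finset (Fin N)) (n : Fin N → ℕ) (L : Fin N → ℂ)
    (hL : ∀ k ∈ S, L k ≠ 0)
    (hlim : ∀ k ∈ S, Filter.Tendsto (fun u : ℝ => G k u / (u : ℂ) ^ n k)
      (nhdsWithin 0 (Ioi 0)) (nhds (L k)))
    (hsum : ∀ u : ℝ, 0 < u → ∑ k ∈ S, ((u ^ α k : ℝ) : ℂ) * G k u = 0) : S = ∅ := by
  by_contra hS
  obtain ⟨k₀, hk₀, hmin⟩ := Finset.exists_min_image S (fun k => α k + n k)
    (Finset.nonempty_iff_ne_empty.mpr hS)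
  have hlt : ∀ k ∈ S, k ≠ k₀ → 0 < (α k + n k) - (α k₀ + n k₀) := by
    intro k hk hne
    refine lt_of_le_of_ne (sub_nonneg.mpr (hmin k hk)) fun heq => ?_
    refine hdiff k₀ k hne.symm ((n k₀ : ℤ) - n k) ?_
    push_cast
    linarith
  have ht : ∀ k ∈ S, Filter.Tendsto
      (fun u : ℝ => ((u ^ ((α k + n k) - (α k₀ + n k₀)) : ℝ) : ℂ) * (G k u / (u : ℂ) ^ n k))
      (nhdsWithin 0 (Ioi 0)) (nhds (if k = k₀ then L k₀ else 0)) := by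
    intro k hk
    split_ifs with h
    · subst h
      simpa using hlim k hk
    · have h1 : Filter.Tendsto (fun u : ℝ => ((u ^ ((α k + n k) - (α k₀ + n k₀)) : ℝ) : ℂ))
          (nhdsWithin 0 (Ioi 0)) (nhds 0) := by
        have hpos := hlt k hk h
        have h2 := (Real.continuousAt_rpow_const 0 _ (Or.inr hpos.le)).tendsto
        rw [Real.zero_rpow hpos.ne'] at h2
        have h3 := (Complex.continuous_ofReal.tendsto 0).comp (h2.mono_left
          (nhdsWithin_le_nhds (s := Ioi 0)))
        simpa [Function.comp_def] using h3
      simpa using h1.mul (hlim k hk)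
  have hs := tendsto_finsetSum S ht
  rw [Finset.sum_ite_eq' S k₀, if_pos hk₀] at hs
  have hz : Filter.Tendsto (fun _ : ℝ => (0 : ℂ)) (nhdsWithin 0 (Ioi 0)) (nhds (L k₀)) := by
    refine hs.congr' ?_
    filter_upwards [self_mem_nhdsWithin] with u hu
    have hu' : (0 : ℝ) < u := hu
    have hterm : ∀ k, ((u ^ ((α k + n k) - (α k₀ + n k₀)) : ℝ) : ℂ) * (G k u / (u : ℂ) ^ n k)
        = ((u ^ (-(α k₀ + n k₀)) : ℝ) : ℂ) * (((u ^ α k : ℝ) : ℂ) * G k u) := by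
      intro k
      have hne : (u : ℂ) ^ n k ≠ 0 := pow_ne_zero _ (by exact_mod_cast hu'.ne')
      rw [sub_eq_add_neg, Real.rpow_add hu', Real.rpow_add hu', Real.rpow_natCast]
      push_cast
      field_simp
    simp only [hterm, ← Finset.mul_sum]
    rw [hsum u hu', mul_zero]
  exact hL k₀ hk₀ (tendsto_nhds_unique hz tendsto_const_nhds)

lemma aux_tendsto (G : ℝ → ℂ) (n : ℕ) (L : ℂ) (K u₀ : ℝ) (hu₀ : 0 < u₀)
    (h : ∀ u : ℝ, 0 < u → u ≤ u₀ → ‖G u - (-u : ℂ) ^ n / n.factorial * L‖ ≤ K * u ^ (n + 1)) :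
    Filter.Tendsto (fun u : ℝ => G u / (u : ℂ) ^ n) (nhdsWithin 0 (Ioi 0))
      (nhds ((-1) ^ n / n.factorial * L)) := by
  rw [tendsto_iff_norm_sub_tendsto_zero]
  have hK : Filter.Tendsto (fun u : ℝ => K * u) (nhdsWithin 0 (Ioi 0)) (nhds 0) := by
    have : Filter.Tendsto (fun u : ℝ => K * u) (nhds 0) (nhds (K * 0)) :=
      (continuous_const.mul continuous_id).tendsto 0
    rw [mul_zero] at this
    exact this.mono_left nhdsWithin_le_nhds
  refine squeeze_zero' (Filter.Eventually.of_forall fun u => norm_nonneg _) ?_ hK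
  filter_upwards [Ioc_mem_nhdsGT hu₀] with u hu
  have hu' : 0 < u := hu.1
  have hne : (u : ℂ) ≠ 0 := by exact_mod_cast hu'.ne'
  have e : G u / (u : ℂ) ^ n - (-1) ^ n / n.factorial * L =
      (G u - (-u : ℂ) ^ n / n.factorial * L) / (u : ℂ) ^ n := by
    rw [neg_pow (u : ℂ)]
    field_simp
  rw [e, norm_div, norm_pow, Complex.norm_real, Real.norm_of_nonneg hu'.le,
    div_le_iff₀ (by positivity)]
  refine (h u hu.1 hu.2).trans (le_of_eq ?_)
  ring

theorem entanglement_decoupling_lemma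
    (N : ℕ) (hN : 1 ≤ N) (α : Fin N → ℝ)
    (hpos : ∀ k, 0 < α k)
    (hmono : StrictMono α)
    (hnotnat : ∀ k, ∀ m : ℕ, α k ≠ m)
    (hdiff : ∀ j k : Fin N, j ≠ k → ∀ m : ℤ, α k - α j ≠ m)
    (a : ℝ) (ha : 0 < a) (ℓ : ℕ)
    (f : Fin N → ℝ → ℂ)
    (hsmooth : ∀ k, ContDiffOn ℝ (⊤ : ℕ∞) (f k) (Ioi 0))
    (c δ : ℝ) (hc : 0 < c) (hδ : 0 < δ)
    (hdecay_infty : ∀ k, ∀ τ : ℝ, a < τ → ‖f k τ‖ ≤ c * Real.exp (-δ * τ))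
    (hdecay_zero : ∀ k, ∀ τ : ℝ, 0 < τ → τ ≤ a → ‖f k τ‖ ≤ c * Real.exp (-δ / τ))
    (hvanish : ∀ m : ℕ, ℓ ≤ m →
      ∑ k, (Real.Gamma ((m : ℝ) + 1 + α k) : ℂ) *
        ∫ τ in Ioi (0 : ℝ), f k τ * ((τ ^ (-(m : ℝ)) : ℝ) : ℂ) = 0) :
    ∀ k, ∀ τ : ℝ, 0 < τ → f k τ = 0 := by
  have hfb : ∀ k, ∀ τ, 0 < τ → ‖f k τ‖ ≤
      (c * Real.exp (δ * a + δ / a)) * Real.exp (-δ * τ - δ / τ) := by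
    intro k τ hτ
    rw [mul_assoc, ← Real.exp_add]
    rcases le_or_gt τ a with h | h
    · refine (hdecay_zero k τ hτ h).trans ?_
      gcongr
      have h1 : δ * τ ≤ δ * a := by gcongr
      have h2 : 0 ≤ δ / a := by positivity
      rw [neg_div]
      linarith
    · refine (hdecay_infty k τ h).trans ?_
      gcongr
      have h1 : δ / τ ≤ δ / a := by gcongr
      have h2 : 0 ≤ δ * a := by positivity
      linarith
  have hd : 0 < δ / 2 := by positivity
  choose C hC using fun k => aux_mul_rpow _ δ (α k + 1) hδ (f k) (hfb k)
  set g : Fin N → ℝ → ℂ := fun k τ => f k τ * ((τ ^ (α k + 1) : ℝ) : ℂ) with hgdef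
  have hg : ∀ k, ContinuousOn (g k) (Ioi 0) := fun k =>
    aux_contOn (f k) (hsmooth k).continuousOn _
  have hzero := aux_sum_zero N α hpos ℓ (δ / 2) hd C g hg hC (by
    intro m hm
    rw [← hvanish m hm]
    refine Finset.sum_congr rfl fun k _ => ?_
    congr 1
    refine setIntegral_congr_fun measurableSet_Ioi (fun τ hτ => ?_)
    have hτ' : 0 < τ := hτ
    simp only [hgdef]
    rw [mul_assoc, ← Complex.ofReal_mul, ← Real.rpow_add hτ']
    congr 3
    ring)
  classical
  set M : Fin N → ℕ → ℂ := fun k n => ∫ τ in Ioi (0 : ℝ), (τ : ℂ) ^ n * g k τ with hM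
  have hg0 : ∀ k, (¬ ∃ n, M k n ≠ 0) → ∀ τ, 0 < τ → g k τ = 0 := by
    intro k hk
    push Not at hk
    exact aux_moment_pos (C k) (δ / 2) hd (g k) (hg k) (hC k) hk
  set S : Finset (Fin N) := Finset.univ.filter fun k => ∃ n, M k n ≠ 0 with hSdef
  set n : Fin N → ℕ := fun k => if h : ∃ n, M k n ≠ 0 then Nat.find h else 0 with hn
  have hSe : S = ∅ := by
    refine aux_decouple N α hdiff (fun k => auxLap (g k)) S n
      (fun k => (-1) ^ n k / (n k).factorial * M k (n k)) ?_ ?_ ?_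
    · intro k hk
      have hk' : ∃ n, M k n ≠ 0 := (Finset.mem_filter.mp hk).2
      have : M k (n k) ≠ 0 := by
        simp only [hn, dif_pos hk']
        exact Nat.find_spec hk'
      have h2 : ((n k).factorial : ℂ) ≠ 0 := by exact_mod_cast (n k).factorial_ne_zero
      exact mul_ne_zero (div_ne_zero (pow_ne_zero _ (by norm_num)) h2) this
    · intro k hk
      have hk' : ∃ n, M k n ≠ 0 := (Finset.mem_filter.mp hk).2
      obtain ⟨K, hK⟩ := aux_lap_asymp (C k) (δ / 2) hd (g k) (hg k) (hC k) (n k) (by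
        intro j hj
        simp only [hn, dif_pos hk'] at hj
        exact not_not.mp (Nat.find_min hk' hj))
      exact aux_tendsto _ _ _ K (δ / 2 / 2) (by positivity) hK
    · intro u hu
      rw [← hzero u hu]
      refine Finset.sum_subset (Finset.subset_univ _) fun k _ hk => ?_
      have hk' : ¬ ∃ n, M k n ≠ 0 := fun h => hk (Finset.mem_filter.mpr ⟨Finset.mem_univ _, h⟩)
      have : auxLap (g k) u = 0 := by
        unfold auxLap
        rw [setIntegral_congr_fun (g := fun _ => (0 : ℂ)) measurableSet_Ioi
          (fun τ hτ => by simp only [hg0 k hk' τ hτ, zero_mul])]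
        simp
      rw [this, mul_zero]
  intro k τ hτ
  have hk' : ¬ ∃ n, M k n ≠ 0 := fun h => by
    have : k ∈ S := Finset.mem_filter.mpr ⟨Finset.mem_univ _, h⟩
    rw [hSe] at this
    exact absurd this (Finset.notMem_empty k)
  have h := hg0 k hk' τ hτ
  simp only [hgdef] at h
  refine (mul_eq_zero.mp h).resolve_right ?_
  exact_mod_cast (Real.rpow_pos_of_pos hτ _).ne'
end

section
/- Let n ≥ 2, let 𝒪 ⊂ ℝⁿ be a nonempty open set, let N ≥ 1, T > 0, and 0 < s_1 < s_2 < … < s_N < 1. Suppose v_1, …, v_N ∈ C^∞((−∞,T); 𝒮(ℝⁿ)) satisfy the following decay: there exist δ > 0 and, for each multi-index β = (β_0,β_1,…,β_n) ∈ (ℕ∪{0})^{n+1}, a constant C_β > 0 and a Schwartz function φ_β ∈ 𝒮(ℝⁿ) such that for all (x,t) ∈ ℝⁿ × (−∞,−T] and every k: |v_k(x,t)| ≤ C_0 |φ_0(x)| e^{δt}, and |D^β_{x,t} v_k(x,t)| ≤ C_β |φ_β(x)| for every β with |β| ≥ 1. If v_1 = v_2 = … = v_N = 0 on 𝒪 ×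 (−T,T) and Σ_{k=1}^N 𝓗^{s_k} v_k = 0 on 𝒪 × (−T,T), then v_k = 0 on ℝⁿ × (−T,T) for every k = 1,…,N. -/
open MeasureTheory Real Set Complex

noncomputable section

/-- A space-time point `(x, t)` with `x : Fin n → ℝ` and `t : ℝ`. -/
abbrev SpaceTime (n : ℕ) := (Fin n → ℝ) × ℝ

/-- Squared Euclidean norm `|x|² = ∑ xᵢ²`. -/
def sqNorm {n : ℕ} (x : Fin n → ℝ) : ℝ := ∑ i, x i ^ 2

/-- The Euclidean heat kernel `G_τ(x) = (4πτ)^{-n/2} exp(-|x|²/(4τ))`. -/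
def heatKernel (n : ℕ) (τ : ℝ) (x : Fin n → ℝ) : ℝ :=
  (4 * π * τ) ^ (-(n : ℝ) / 2) * Real.exp (-(sqNorm x) / (4 * τ))

/-- The parabolic evolution semigroup `(e^{-τ𝓗} u)(x,t) = ∫ G_τ(x-y) u(y, t-τ) dy`. -/
def heatSemigroup (n : ℕ) (τ : ℝ) (u : SpaceTime n → ℂ) (p : SpaceTime n) : ℂ :=
  ∫ y : Fin n → ℝ, (heatKernel n τ (p.1 - y) : ℂ) * u (y, p.2 - τ)

/-- The fractional heat operator
`𝓗^s u(x,t) = (1/Γ(-s)) ∫_0^∞ ((e^{-τ𝓗}u)(x,t) - u(x,t)) τ^{-1-s} dτ`. -/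
def fracHeat (n : ℕ) (s : ℝ) (u : SpaceTime n → ℂ) (p : SpaceTime n) : ℂ :=
  (1 / (Real.Gamma (-s) : ℂ)) *
    ∫ τ in Ioi (0 : ℝ), (heatSemigroup n τ u p - u p) * ((τ ^ (-1 - s) : ℝ) : ℂ)

/-- Partial derivative in the direction `v`. -/
def pderivDir (n : ℕ) (v : SpaceTime n) (u : SpaceTime n → ℂ) : SpaceTime n → ℂ :=
  fun p => fderiv ℝ u p v

/-- The `i`-th spatial coordinate direction. -/
def eSpace (n : ℕ) (i : Fin n) : SpaceTime n := (Pi.single i 1, 0)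

/-- The time coordinate direction. -/
def eTime (n : ℕ) : SpaceTime n := (0, 1)

/-- The mixed partial derivative `D^β_{x,t} = ∂_t^{β₀} ∂_{x_1}^{β₁} ⋯ ∂_{x_n}^{β_n}`. -/
def Dmixed (n : ℕ) (β0 : ℕ) (β : Fin n → ℕ) (u : SpaceTime n → ℂ) : SpaceTime n → ℂ :=
  (pderivDir n (eTime n))^[β0] <|
    (List.finRange n).foldr (fun i w => (pderivDir n (eSpace n i))^[β i] w) u

/-- The heat operator `∂_t - Δ_x`. -/
def heatOp (n : ℕ) (u : SpaceTime n → ℂ) : SpaceTime n → ℂ :=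
  fun p => pderivDir n (eTime n) u p -
    ∑ i : Fin n, pderivDir n (eSpace n i) (pderivDir n (eSpace n i) u) p

/-- The space-time Fourier transform `û(ξ,ρ) = ∫ u(x,t) e^{-i(x·ξ + tρ)} dx dt`. -/
def fourierST (n : ℕ) (u : SpaceTime n → ℂ) (q : SpaceTime n) : ℂ :=
  ∫ p : SpaceTime n, u p * Complex.exp (-Complex.I * (∑ i, p.1 i * q.1 i + p.2 * q.2))

/-- The parabolic symbol `iρ + |ξ|²`. -/
def parSymbol (n : ℕ) (q : SpaceTime n) : ℂ :=
  Complex.I * q.2 + (sqNorm q.1 : ℂ)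

/-- `v ∈ C^∞((-∞,T); 𝒮(ℝⁿ))`: smooth on `ℝⁿ × (-∞,T)` and, together with all of its
mixed derivatives, decaying faster than any power of `x`, locally uniformly in `t < T`. -/
def SmoothSchwartzUpTo (n : ℕ) (T : ℝ) (v : SpaceTime n → ℂ) : Prop :=
  ContDiffOn ℝ (⊤ : ℕ∞) v {p : SpaceTime n | p.2 < T} ∧
  ∀ (β0 : ℕ) (β : Fin n → ℕ) (k : ℕ) (a T' : ℝ), T' < T →
    ∃ C : ℝ, ∀ (x : Fin n → ℝ) (t : ℝ), a ≤ t → t ≤ T' →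
      ‖x‖ ^ k * ‖Dmixed n β0 β v (x, t)‖ ≤ C

/-!
Theorem 3.2 of the paper (entanglement principle for fractional heat operators),
in the Euclidean case `g = I`.
-/


open scoped Topology in
theorem expT_diff {E : Type*} [MeasurableSpace E] {μ : Measure E} {h : E → ℂ} {l : E → ℝ} {c : ℝ}
    (hm : AEStronglyMeasurable h μ) (hl : AEMeasurable l μ)
    (hintg : Integrable (fun w => ‖h w‖ * Real.exp (c * |l w|)) μ) :
    DifferentiableOn ℂ (fun z : ℂ => ∫ w, h w * Complex.exp (z * l w) ∂μ) {z : ℂ | |z.re| < c} := by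
  intro z hz
  apply DifferentiableAt.differentiableWithinAt
  simp only [mem_ofPred_eq] at hz
  obtain ⟨c1, h1, h2⟩ := exists_between hz
  have hd : 0 < c - c1 := by linarith
  have hS : {z : ℂ | |z.re| < c1} ∈ 𝓝 z :=
    (isOpen_lt (by fun_prop) (by fun_prop)).mem_nhds h1
  have hmeas : ∀ x : ℂ, AEStronglyMeasurable (fun w => h w * Complex.exp (x * l w)) μ := by
    intro x
    refine hm.mul ?_
    apply AEMeasurable.aestronglyMeasurable
    fun_prop
  have hexp : ∀ x : ℂ, |x.re| < c1 → ∀ w, ‖Complex.exp (x * l w)‖ ≤ Real.exp (c1 * |l w|) := by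
    intro x hx w
    rw [Complex.norm_exp]
    apply Real.exp_le_exp.2
    simp only [mul_re, ofReal_re, ofReal_im, mul_zero, sub_zero]
    calc x.re * l w ≤ |x.re * l w| := le_abs_self _
      _ = |x.re| * |l w| := abs_mul _ _
      _ ≤ _ := by gcongr
  have hbd : Integrable (fun w => (c - c1)⁻¹ * (‖h w‖ * Real.exp (c * |l w|))) μ := hintg.const_mul _
  have key := hasDerivAt_integral_of_dominated_loc_of_deriv_le (μ := μ) (𝕜 := ℂ)
    (F := fun (x : ℂ) w => h w * Complex.exp (x * l w))
    (F' := fun (x : ℂ) w => h w * (Complex.exp (x * l w) * l w)) (x₀ := z) hS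
    (Filter.Eventually.of_forall hmeas)
    (by
      refine hintg.mono' (hmeas z) (Filter.Eventually.of_forall fun w => ?_)
      rw [norm_mul]
      gcongr
      refine (hexp z h1 w).trans ?_
      apply Real.exp_le_exp.2
      gcongr)
    (by
      refine hm.mul ?_
      apply AEMeasurable.aestronglyMeasurable
      fun_prop)
    (bound := fun w => (c - c1)⁻¹ * (‖h w‖ * Real.exp (c * |l w|)))
    (by
      refine Filter.Eventually.of_forall fun w x hx => ?_
      rw [norm_mul, norm_mul]
      have e1 := hexp x hx w
      have e2 : ‖(l w : ℂ)‖ ≤ (c - c1)⁻¹ * Real.exp ((c - c1) * |l w|) := by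
        rw [Complex.norm_real, Real.norm_eq_abs]
        have := Real.add_one_le_exp ((c - c1) * |l w|)
        rw [inv_mul_eq_div, le_div_iff₀ hd]
        nlinarith
      calc ‖h w‖ * (‖Complex.exp (x * l w)‖ * ‖(l w : ℂ)‖)
          ≤ ‖h w‖ * (Real.exp (c1 * |l w|) * ((c - c1)⁻¹ * Real.exp ((c - c1) * |l w|))) := by gcongr
        _ = (c - c1)⁻¹ * (‖h w‖ * (Real.exp (c1 * |l w|) * Real.exp ((c - c1) * |l w|))) := by ring
        _ = _ := by rw [← Real.exp_add]; ring_nf)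
    hbd
    (by
      refine Filter.Eventually.of_forall fun w x _ => ?_
      have : HasDerivAt (fun x : ℂ => x * l w) (l w : ℂ) x := by
        simpa using (hasDerivAt_id x).mul_const (l w : ℂ)
      exact (this.cexp).const_mul _)
  exact key.2.differentiableAt

open scoped Topology in
theorem expT_zero {E : Type*} [MeasurableSpace E] {μ : Measure E} {h : E → ℂ} {l : E → ℝ} {c : ℝ}
    (hc : 0 < c)
    (hm : AEStronglyMeasurable h μ) (hl : AEMeasurable l μ)
    (hintg : Integrable (fun w => ‖h w‖ * Real.exp (c * |l w|)) μ)
    (hz : ∃ᶠ z : ℂ in 𝓝[≠] 0, ∫ w, h w * Complex.exp (z * l w) ∂μ = 0) :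
    ∀ z : ℂ, |z.re| < c → ∫ w, h w * Complex.exp (z * l w) ∂μ = 0 := by
  have hopen : IsOpen {z : ℂ | |z.re| < c} := isOpen_lt (by fun_prop) (by fun_prop)
  have ha := (expT_diff hm hl hintg).analyticOnNhd hopen
  have hconv : Convex ℝ {z : ℂ | |z.re| < c} := by
    have : {z : ℂ | |z.re| < c} = Complex.reLm ⁻¹' (Ioo (-c) c) := by
      ext z; simp [abs_lt]
    rw [this]
    exact (convex_Ioo _ _).linear_preimage _
  have := ha.eqOn_zero_of_preconnected_of_frequently_eq_zero hconv.isPreconnected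
    (z₀ := 0) (by simpa using hc) hz
  intro z hz
  exact this hz

open scoped Topology in
/-- real zeros suffice -/
theorem freq_of_real {f : ℂ → ℂ} (h : ∀ᶠ x : ℝ in 𝓝[>] 0, f x = 0) :
    ∃ᶠ z : ℂ in 𝓝[≠] 0, f z = 0 := by
  have ht : Filter.Tendsto (fun x : ℝ => (x : ℂ)) (𝓝[>] 0) (𝓝[≠] 0) := by
    rw [tendsto_nhdsWithin_iff]
    constructor
    · have : Continuous (fun x : ℝ => (x : ℂ)) := by fun_prop
      simpa using (this.tendsto 0).mono_left nhdsWithin_le_nhds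
    · filter_upwards [self_mem_nhdsWithin] with x hx
      have : (0:ℝ) < x := hx
      simpa using this.ne'
  exact ht.frequently h.frequently

/-- Fourier uniqueness on the line, in exponential form. -/
theorem fourier_unique {V : Type*} [NormedAddCommGroup V] [InnerProductSpace ℝ V]
    [MeasurableSpace V] [BorelSpace V] [FiniteDimensional ℝ V] {f : V → ℂ}
    (hi : Integrable f) (h : ∀ w : V, ∫ v, f v * Complex.exp (Complex.I * ((inner ℝ v w : ℝ) : ℂ)) = 0)
    (x : V) (hx : ContinuousAt f x) : f x = 0 := by
  have h0 : FourierTransform.fourier f = 0 := by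
    ext w
    rw [Real.fourier_eq']
    have := h ((-2 * π) • w)
    simp only [Pi.zero_apply]
    rw [← this]
    congr 1; ext v
    rw [inner_smul_right, smul_eq_mul, mul_comm]
    congr 2
    push_cast; ring
  have := hi.fourierInv_fourier_eq (by rw [h0]; exact integrable_zero _ _ _) hx
  rw [← this, h0]
  rw [Real.fourierInv_eq']
  simp

open scoped Topology in
/-- exponentially decaying function with vanishing moments vanishes. -/
theorem moments_zero {h : ℝ → ℂ} {c : ℝ} (hc : 0 < c) (hcont : Continuous h)
    (hintg : Integrable (fun w => ‖h w‖ * Real.exp (c * |w|)))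
    (hmom : ∀ m : ℕ, ∫ w, h w * (w : ℂ) ^ m = 0) : ∀ w, h w = 0 := by
  have hm : AEStronglyMeasurable h volume := hcont.aestronglyMeasurable
  have hi : Integrable h := by
    refine hintg.mono' hm (Filter.Eventually.of_forall fun w => ?_)
    have : 1 ≤ Real.exp (c * |w|) := Real.one_le_exp (by positivity)
    nlinarith [norm_nonneg (h w)]
  have hz : ∀ z : ℂ, ‖z‖ < c → ∫ w, h w * Complex.exp (z * (w : ℝ)) = 0 := by
    intro z hz
    have hs := hasSum_integral_of_dominated_convergence (μ := (volume : Measure ℝ))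
      (F := fun (m : ℕ) w => h w * ((z * (w : ℝ)) ^ m / (m.factorial : ℂ)))
      (f := fun w => h w * Complex.exp (z * (w : ℝ)))
      (fun (m : ℕ) w => ‖h w‖ * ((c * |w|) ^ m / (m.factorial : ℝ)))
      (fun m => by apply Continuous.aestronglyMeasurable; fun_prop)
      (fun m => Filter.Eventually.of_forall fun w => by
        rw [norm_mul, norm_div, norm_pow, norm_mul, Complex.norm_real, Real.norm_eq_abs,
          Complex.norm_natCast]
        gcongr)
      (Filter.Eventually.of_forall fun w => (Real.summable_pow_div_factorial _).mul_left _)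
      (by
        refine hintg.congr (Filter.Eventually.of_forall fun w => ?_)
        simp only
        rw [tsum_mul_left, Real.exp_eq_exp_ℝ, NormedSpace.exp_eq_tsum_div])
      (Filter.Eventually.of_forall fun w => by
        refine HasSum.mul_left _ ?_
        rw [Complex.exp_eq_exp_ℂ]
        exact NormedSpace.expSeries_div_hasSum_exp (z * (w : ℝ)))
    have h0 : ∀ m : ℕ, ∫ w : ℝ, h w * ((z * (w : ℝ)) ^ m / (m.factorial : ℂ)) = 0 := by
      intro m
      have : ∀ w : ℝ, h w * ((z * (w : ℝ)) ^ m / (m.factorial : ℂ)) =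
          (z ^ m / (m.factorial : ℂ)) * (h w * (w : ℂ) ^ m) := by
        intro w; rw [mul_pow]; ring
      simp_rw [this]
      rw [integral_const_mul, hmom, mul_zero]
    simp_rw [h0] at hs
    exact hs.unique hasSum_zero
  have hall := expT_zero (l := fun w : ℝ => w) hc hm aemeasurable_id hintg (by
    apply freq_of_real
    have : Ioo (0:ℝ) c ∈ 𝓝[>] (0:ℝ) := Ioo_mem_nhdsGT hc
    filter_upwards [this] with x hx
    apply hz
    rw [Complex.norm_real, Real.norm_eq_abs, abs_of_pos hx.1]
    exact hx.2)
  intro w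
  refine fourier_unique hi ?_ w hcont.continuousAt
  intro ξ
  have := hall (Complex.I * ξ) (by simpa using hc)
  rw [← this]
  congr 1; ext v
  congr 2
  simp
  ring

open scoped Topology in
theorem separation {N : ℕ} {s : Fin N → ℝ} (hs0 : ∀ k, 0 < s k) (hs1 : ∀ k, s k < 1)
    (hinj : Function.Injective s) {b : Fin N → ℂ} (hb : ∀ k, b k ≠ 0) {L : Fin N → ℂ → ℂ}
    (hL : ∀ k, AnalyticAt ℂ (L k) 0)
    (hsum : ∀ᶠ x : ℝ in 𝓝[>] 0, ∑ k, b k * ((x ^ s k : ℝ) : ℂ) * L k x = 0) :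
    ∀ k, ∀ᶠ z in 𝓝 0, L k z = 0 := by
  classical
  by_contra hcon
  push Not at hcon
  obtain ⟨k0, hk0⟩ := hcon
  set S : Finset (Fin N) := Finset.univ.filter (fun k => ¬ ∀ᶠ z in 𝓝 0, L k z = 0) with hS
  have hk0S : k0 ∈ S := by simp [hS, hk0]
  have hex : ∀ k, ∃ (m : ℕ) (g : ℂ → ℂ), k ∈ S → (AnalyticAt ℂ g 0 ∧ g 0 ≠ 0 ∧
      ∀ᶠ z in 𝓝 0, L k z = z ^ m * g z) := by
    intro k
    by_cases hk : k ∈ S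
    · have hk' : ¬ ∀ᶠ z in 𝓝 0, L k z = 0 := by simpa [hS] using hk
      obtain ⟨m, g, h1, h2, h3⟩ := (hL k).exists_eventuallyEq_pow_smul_nonzero_iff.2 hk'
      exact ⟨m, g, fun _ => ⟨h1, h2, by simpa using h3⟩⟩
    · exact ⟨0, 0, fun h => absurd h hk⟩
  choose m g hmg using hex
  obtain ⟨ks, hks, hmin⟩ := S.exists_min_image (fun k => (m k : ℝ) + s k) ⟨k0, hk0S⟩
  have hlt : ∀ k ∈ S, k ≠ ks → (m ks : ℝ) + s ks < m k + s k := by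
    intro k hk hne
    refine lt_of_le_of_ne (hmin k hk) ?_
    intro heq
    apply hne
    apply hinj
    have h1 := hs0 k; have h2 := hs1 k; have h3 := hs0 ks; have h4 := hs1 ks
    have ha : (m ks : ℝ) < m k + 1 := by linarith
    have hb' : (m k : ℝ) < m ks + 1 := by linarith
    have ha' : m ks < m k + 1 := by exact_mod_cast ha
    have hb'' : m k < m ks + 1 := by exact_mod_cast hb'
    have : m k = m ks := by omega
    rw [this] at heq
    linarith
  have hcoe : Filter.Tendsto (fun x : ℝ => (x : ℂ)) (𝓝[>] 0) (𝓝 0) := by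
    have : Continuous (fun x : ℝ => (x : ℂ)) := by fun_prop
    simpa using (this.tendsto 0).mono_left nhdsWithin_le_nhds
  have hlim : Filter.Tendsto (fun x : ℝ => ∑ k ∈ S, b k *
      ((x ^ ((m k + s k) - (m ks + s ks)) : ℝ) : ℂ) * g k x) (𝓝[>] 0)
      (𝓝 (∑ k ∈ S, if k = ks then b ks * g ks 0 else 0)) := by
    apply tendsto_finsetSum
    intro k hk
    have hgk : Filter.Tendsto (fun x : ℝ => g k x) (𝓝[>] 0) (𝓝 (g k 0)) :=
      ((hmg k hk).1.continuousAt.tendsto).comp hcoe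
    by_cases hkk : k = ks
    · subst hkk
      simp only [sub_self, Real.rpow_zero, if_true, ofReal_one, mul_one]
      exact hgk.const_mul _
    · simp only [hkk, if_false]
      have hp : 0 < ((m k : ℝ) + s k) - (m ks + s ks) := by linarith [hlt k hk hkk]
      have h1 : Filter.Tendsto (fun x : ℝ => x ^ ((m k + s k) - (m ks + s ks))) (𝓝[>] 0) (𝓝 0) := by
        have := (Real.continuousAt_rpow_const 0 _ (Or.inr hp.le)).tendsto.mono_left
          (nhdsWithin_le_nhds (s := Ioi 0))
        rwa [Real.zero_rpow hp.ne'] at this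
      have h2 := (Complex.continuous_ofReal.tendsto 0).comp h1
      have h3 := (h2.const_mul (b k)).mul hgk
      simpa using h3
  have hzero : ∀ᶠ x : ℝ in 𝓝[>] 0, ∑ k ∈ S, b k *
      ((x ^ ((m k + s k) - (m ks + s ks)) : ℝ) : ℂ) * g k x = 0 := by
    have hfac : ∀ᶠ x : ℝ in 𝓝[>] 0, ∀ k, (k ∈ S → L k x = (x : ℂ) ^ m k * g k x) ∧
        (k ∉ S → L k x = 0) := by
      rw [Filter.eventually_all]
      intro k
      by_cases hk : k ∈ S
      · filter_upwards [hcoe.eventually (hmg k hk).2.2] with x hx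
        exact ⟨fun _ => hx, fun h => absurd hk h⟩
      · have : ∀ᶠ z in 𝓝 0, L k z = 0 := by simpa [hS] using hk
        filter_upwards [hcoe.eventually this] with x hx
        exact ⟨fun h => absurd h hk, fun _ => hx⟩
    filter_upwards [hfac, hsum, self_mem_nhdsWithin] with x hx hs hpos
    have hpos : 0 < x := hpos
    have h1 : ∑ k ∈ S, b k * ((x ^ s k : ℝ) : ℂ) * L k x = 0 := by
      rw [← hs]
      apply Finset.sum_subset (Finset.subset_univ _)
      intro k _ hk
      rw [(hx k).2 hk, mul_zero]
    have h2 : ∑ k ∈ S, b k * ((x ^ ((m k + s k) - (m ks + s ks)) : ℝ) : ℂ) * g k x =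
        ((x ^ (-(m ks + s ks)) : ℝ) : ℂ) * ∑ k ∈ S, b k * ((x ^ s k : ℝ) : ℂ) * L k x := by
      rw [Finset.mul_sum]
      apply Finset.sum_congr rfl
      intro k hk
      rw [(hx k).1 hk]
      have : x ^ (((m k : ℝ) + s k) - (m ks + s ks)) =
          x ^ (-((m ks : ℝ) + s ks)) * x ^ (s k) * x ^ (m k) := by
        rw [← Real.rpow_natCast x (m k), ← Real.rpow_add hpos, ← Real.rpow_add hpos]
        ring_nf
      rw [this]
      push_cast
      ring
    rw [h2, h1, mul_zero]
  have hl0 := tendsto_nhds_unique (hlim.congr' hzero) tendsto_const_nhds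
  rw [Finset.sum_ite_eq' S ks] at hl0
  simp only [hks, if_true, mul_eq_zero] at hl0
  rcases hl0 with h | h
  · exact hb _ h
  · exact (hmg ks hks).2.1 h

theorem integrable_abs_aux {f : ℝ → ℝ} (hf : IntegrableOn f (Ioi 0)) :
    Integrable (fun x => f |x|) := by
  have h1 : IntegrableOn (fun x => f |x|) (Ioi 0) := by
    refine hf.congr_fun (fun x hx => ?_) measurableSet_Ioi
    rw [abs_of_pos (show 0 < x from hx)]
  have h2 : IntegrableOn (fun x => f |x|) (Iio 0) := by
    have := ((Measure.measurePreserving_neg (volume : Measure ℝ)).integrableOn_comp_preimage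
      (Homeomorph.neg ℝ).measurableEmbedding (f := fun x => f |x|) (s := Ioi 0)).2 h1
    have h3 : (Neg.neg ⁻¹' Ioi (0:ℝ)) = Iio 0 := by ext x; simp
    rw [h3] at this
    refine this.congr_fun (fun x _ => ?_) measurableSet_Iio
    simp
  rw [← integrableOn_univ, ← Iic_union_Ioi (a := (0:ℝ))]
  exact ((integrableOn_Iic_iff_integrableOn_Iio (by simp)).2 h2).union h1

/-- Laplace transform -/
def lap (F : ℝ → ℂ) (z : ℂ) : ℂ := ∫ τ in Ioi (0:ℝ), F τ * Complex.exp (z * ((-τ : ℝ) : ℂ))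

theorem amgm_aux {c τ w : ℝ} (hc : 0 < c) (hτ : 0 < τ) :
    -c / τ + w ^ 2 * (-τ) ≤ -(2 * √c * |w|) := by
  have h1 : √c ^ 2 = c := Real.sq_sqrt hc.le
  have h2 : |w| ^ 2 = w ^ 2 := sq_abs w
  have : 0 ≤ (√c - |w| * τ) ^ 2 / τ := by positivity
  have h3 : (√c - |w| * τ) ^ 2 / τ = c / τ + w ^ 2 * τ - 2 * √c * |w| := by
    field_simp
    rw [← h2]; nth_rewrite 2 [← h1]; ring
  have h4 : -c / τ = -(c / τ) := by ring
  rw [h4]; linarith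

section core
variable {F : ℝ → ℂ} {C c δ : ℝ}

theorem lap_meas (hcont : ContinuousOn F (Ioi 0)) : AEStronglyMeasurable F (volume.restrict (Ioi 0)) :=
  hcont.aestronglyMeasurable measurableSet_Ioi

theorem lap_pt (hC : 0 < C) (hc : 0 < c)
    (hbd : ∀ τ, 0 < τ → ‖F τ‖ ≤ C * Real.exp (-c / τ) * Real.exp (-δ * τ)) (w τ : ℝ) (hτ : 0 < τ) :
    ‖F τ * Complex.exp ((w ^ 2 : ℝ) * ((-τ : ℝ) : ℂ))‖ ≤
      C * Real.exp (-(2 * √c * |w|)) * Real.exp (-δ * τ) := by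
  rw [norm_mul, Complex.norm_exp]
  have : (((w ^ 2 : ℝ) : ℂ) * ((-τ : ℝ) : ℂ)).re = w ^ 2 * (-τ) := by
    rw [← Complex.ofReal_mul, Complex.ofReal_re]
  rw [this]
  calc ‖F τ‖ * Real.exp (w ^ 2 * (-τ))
      ≤ (C * Real.exp (-c / τ) * Real.exp (-δ * τ)) * Real.exp (w ^ 2 * (-τ)) := by
        gcongr; exact hbd τ hτ
    _ = C * (Real.exp (-c / τ + w ^ 2 * (-τ))) * Real.exp (-δ * τ) := by
        rw [Real.exp_add]; ring
    _ ≤ _ := by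
        gcongr
        exact amgm_aux hc hτ

theorem lap_bound (hC : 0 < C) (hc : 0 < c) (hδ : 0 < δ)
    (hbd : ∀ τ, 0 < τ → ‖F τ‖ ≤ C * Real.exp (-c / τ) * Real.exp (-δ * τ)) (w : ℝ) : ‖lap F ((w ^ 2 : ℝ) : ℂ)‖ ≤ C / δ * Real.exp (-(2 * √c * |w|)) := by
  unfold lap
  have h1 : IntegrableOn (fun τ => C * Real.exp (-(2 * √c * |w|)) * Real.exp (-δ * τ)) (Ioi 0) :=
    (integrableOn_exp_mul_Ioi (by linarith) 0).const_mul _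
  refine (norm_integral_le_of_norm_le h1 ?_).trans ?_
  · filter_upwards [ae_restrict_mem measurableSet_Ioi] with τ hτ
    exact lap_pt hC hc hbd w τ hτ
  · rw [integral_const_mul, integral_exp_mul_Ioi (by linarith)]
    simp only [mul_zero, Real.exp_zero]
    apply le_of_eq
    field_simp

theorem lap_cont (hC : 0 < C) (hc : 0 < c) (hδ : 0 < δ) (hcont : ContinuousOn F (Ioi 0))
    (hbd : ∀ τ, 0 < τ → ‖F τ‖ ≤ C * Real.exp (-c / τ) * Real.exp (-δ * τ)) : Continuous (fun w : ℝ => lap F ((w ^ 2 : ℝ) : ℂ)) := by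
  unfold lap
  apply continuous_of_dominated (bound := fun τ => C * Real.exp (-δ * τ))
  · intro w
    refine (lap_meas hcont).mul ?_
    apply Continuous.aestronglyMeasurable
    fun_prop
  · intro w
    filter_upwards [ae_restrict_mem measurableSet_Ioi] with τ hτ
    refine (lap_pt hC hc hbd w τ hτ).trans ?_
    have : Real.exp (-(2 * √c * |w|)) ≤ 1 := Real.exp_le_one_iff.2 (by
      have : 0 ≤ 2 * √c * |w| := by positivity
      linarith)
    calc C * Real.exp (-(2 * √c * |w|)) * Real.exp (-δ * τ) ≤ C * 1 * Real.exp (-δ * τ) := by gcongr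
      _ = _ := by ring
  · exact (integrableOn_exp_mul_Ioi (by linarith) 0).const_mul _
  · refine Filter.Eventually.of_forall fun τ => ?_
    fun_prop

theorem lap_int (hC : 0 < C) (hc : 0 < c) (hδ : 0 < δ) (hcont : ContinuousOn F (Ioi 0))
    (hbd : ∀ τ, 0 < τ → ‖F τ‖ ≤ C * Real.exp (-c / τ) * Real.exp (-δ * τ)) : Integrable (fun τ => ‖F τ‖ * Real.exp (δ / 2 * |(-τ)|)) (volume.restrict (Ioi 0)) := by
  have h1 : IntegrableOn (fun τ => C * Real.exp (-(δ/2) * τ)) (Ioi 0) :=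
    (integrableOn_exp_mul_Ioi (by linarith) 0).const_mul _
  refine Integrable.mono' h1 ?_ ?_
  · refine (lap_meas hcont).norm.mul ?_
    apply Continuous.aestronglyMeasurable
    fun_prop
  · filter_upwards [ae_restrict_mem measurableSet_Ioi] with τ hτ
    have hτ : 0 < τ := hτ
    rw [norm_mul, norm_norm, Real.norm_eq_abs, Real.abs_exp, abs_neg, abs_of_pos hτ]
    have h2 : Real.exp (-c / τ) ≤ 1 := Real.exp_le_one_iff.2 (by
      have : 0 ≤ c / τ := by positivity
      rw [neg_div]; linarith)
    calc ‖F τ‖ * Real.exp (δ / 2 * τ) ≤ (C * 1 * Real.exp (-δ * τ)) * Real.exp (δ / 2 * τ) := by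
          gcongr
          exact (hbd τ hτ).trans (by gcongr)
      _ = C * (Real.exp (-δ * τ) * Real.exp (δ / 2 * τ)) := by ring
      _ = _ := by rw [← Real.exp_add]; ring_nf

theorem lap_analytic (hC : 0 < C) (hc : 0 < c) (hδ : 0 < δ) (hcont : ContinuousOn F (Ioi 0))
    (hbd : ∀ τ, 0 < τ → ‖F τ‖ ≤ C * Real.exp (-c / τ) * Real.exp (-δ * τ)) : AnalyticAt ℂ (lap F) 0 := by
  have hd := expT_diff (lap_meas hcont) (l := fun τ => -τ) (by fun_prop)
    (lap_int hC hc hδ hcont hbd)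
  have hopen : IsOpen {z : ℂ | |z.re| < δ / 2} := isOpen_lt (by fun_prop) (by fun_prop)
  exact hd.analyticOnNhd hopen 0 (by simpa using by linarith)

open scoped Topology in
theorem lap_inj (hC : 0 < C) (hc : 0 < c) (hδ : 0 < δ) (hcont : ContinuousOn F (Ioi 0))
    (hbd : ∀ τ, 0 < τ → ‖F τ‖ ≤ C * Real.exp (-c / τ) * Real.exp (-δ * τ)) (h0 : ∀ᶠ z in 𝓝 0, lap F z = 0) : ∀ τ, 0 < τ → F τ = 0 := by
  have hz := expT_zero (c := δ / 2) (by linarith) (lap_meas hcont) (l := fun τ => -τ) (by fun_prop)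
    (lap_int hC hc hδ hcont hbd) (by
      apply Filter.Eventually.frequently
      exact h0.filter_mono nhdsWithin_le_nhds)
  intro τ hτ
  have hi : Integrable (F) (volume.restrict (Ioi 0)) := by
    refine (lap_int hC hc hδ hcont hbd).mono' (lap_meas hcont) (Filter.Eventually.of_forall fun w => ?_)
    have : 1 ≤ Real.exp (δ / 2 * |(-w)|) := Real.one_le_exp (by positivity)
    nlinarith [norm_nonneg (F w)]
  have := fourier_unique (f := (Ioi 0).indicator F) ((integrable_indicator_iff measurableSet_Ioi).2 hi) (by
    intro w
    have := hz (-Complex.I * w) (by simpa using hδ)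
    rw [← integral_indicator measurableSet_Ioi] at this
    rw [← this]
    congr 1; ext v
    simp only [indicator]
    split_ifs
    · congr 2
      simp
      ring
    · simp) τ (by
      have h1 : ContinuousAt F τ := hcont.continuousAt (Ioi_mem_nhds hτ)
      refine h1.congr ?_
      filter_upwards [Ioi_mem_nhds hτ] with x hx
      simp [indicator, show 0 < x from hx])
  simpa [indicator, hτ] using this

theorem lap_moment (hC : 0 < C) (hc : 0 < c) (hδ : 0 < δ) (hcont : ContinuousOn F (Ioi 0))
    (hbd : ∀ τ, 0 < τ → ‖F τ‖ ≤ C * Real.exp (-c / τ) * Real.exp (-δ * τ)) {p : ℝ} (hp : 0 < p) :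
    ∫ w in Ioi (0:ℝ), ((w ^ p : ℝ) : ℂ) * lap F ((w ^ 2 : ℝ) : ℂ) =
      (1 / 2 * Real.Gamma ((p + 1) / 2) : ℝ) *
        ∫ τ in Ioi (0:ℝ), F τ * ((τ ^ (-(p + 1) / 2) : ℝ) : ℂ) := by
  unfold lap
  simp_rw [← integral_const_mul]
  rw [integral_integral_swap]
  · apply setIntegral_congr_fun measurableSet_Ioi
    intro τ hτ
    have hτ : 0 < τ := hτ
    simp only
    have h1 : ∀ w : ℝ, ((w ^ p : ℝ) : ℂ) * (F τ * Complex.exp ((w ^ 2 : ℝ) * ((-τ : ℝ) : ℂ))) =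
        F τ * ((w ^ p * Real.exp (-τ * w ^ (2:ℝ)) : ℝ) : ℂ) := by
      intro w
      have : -τ * w ^ (2:ℝ) = w ^ 2 * (-τ) := by norm_num; ring
      rw [this]
      push_cast
      ring
    simp_rw [h1]
    rw [integral_const_mul]
    have h2 : ∫ w in Ioi (0:ℝ), ((w ^ p * Real.exp (-τ * w ^ (2:ℝ)) : ℝ) : ℂ) =
        ((∫ w in Ioi (0:ℝ), w ^ p * Real.exp (-τ * w ^ (2:ℝ)) : ℝ) : ℂ) := integral_ofReal
    rw [h2]
    rw [_root_.integral_rpow_mul_exp_neg_mul_rpow (p := 2) (by norm_num) (by linarith) hτ]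
    push_cast
    ring
  · have h1 : Integrable (fun w : ℝ => w ^ p * Real.exp (-(2 * √c) * w)) (volume.restrict (Ioi 0)) := by
      have hsc : 0 < 2 * √c := by positivity
      have := integrableOn_rpow_mul_exp_neg_mul_rpow (s := p) (p := 1) (b := 2 * √c)
        (by linarith) (by norm_num) hsc
      simp only [Real.rpow_one] at this
      exact this
    have h2 : Integrable (fun τ : ℝ => C * Real.exp (-δ * τ)) (volume.restrict (Ioi 0)) :=
      (integrableOn_exp_mul_Ioi (by linarith) 0).const_mul _
    refine (h1.mul_prod h2).mono' ?_ ?_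
    · refine AEStronglyMeasurable.mul ?_ (AEStronglyMeasurable.mul (lap_meas hcont).comp_snd ?_)
      · apply Measurable.aestronglyMeasurable
        fun_prop
      · apply Measurable.aestronglyMeasurable
        fun_prop
    · rw [Measure.prod_restrict]
      filter_upwards [ae_restrict_mem (measurableSet_Ioi.prod measurableSet_Ioi)] with q hq
      obtain ⟨hq1, hq2⟩ := hq
      have hq1 : 0 < q.1 := hq1
      have hq2 : 0 < q.2 := hq2
      simp only [Function.uncurry]
      rw [norm_mul, Complex.norm_real, Real.norm_eq_abs, abs_of_pos (Real.rpow_pos_of_pos hq1 p)]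
      have := lap_pt hC hc hbd q.1 q.2 hq2
      rw [abs_of_pos hq1] at this
      calc _ ≤ q.1 ^ p * (C * Real.exp (-(2 * √c * q.1)) * Real.exp (-δ * q.2)) := by gcongr
        _ = _ := by ring_nf

end core

open scoped Topology in
theorem analytic_core {N : ℕ} {s : Fin N → ℝ} (hs0 : ∀ k, 0 < s k) (hs1 : ∀ k, s k < 1)
    (hinj : Function.Injective s) {b : Fin N → ℂ} (hb : ∀ k, b k ≠ 0) {F : Fin N → ℝ → ℂ}
    {C c δ : ℝ} (hC : 0 < C) (hc : 0 < c) (hδ : 0 < δ)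
    (hcont : ∀ k, ContinuousOn (F k) (Ioi 0))
    (hbd : ∀ k τ, 0 < τ → ‖F k τ‖ ≤ C * Real.exp (-c / τ) * Real.exp (-δ * τ))
    (hmom : ∀ m : ℕ, ∑ k, b k * (Real.Gamma (1 + s k + m) : ℂ) *
      ∫ τ in Ioi (0:ℝ), F k τ * ((τ ^ (-1 - s k - m) : ℝ) : ℂ) = 0) :
    ∀ k τ, 0 < τ → F k τ = 0 := by
  have hsc : 0 < √c := Real.sqrt_pos.2 hc
  set h : ℝ → ℂ := fun w => ∑ k, b k * ((|w| ^ (1 + 2 * s k) : ℝ) : ℂ) * lap (F k) ((w ^ 2 : ℝ) : ℂ)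
    with hh
  have hhc : Continuous h := by
    apply continuous_finsetSum
    intro k _
    refine (continuous_const.mul ?_).mul (lap_cont hC hc hδ (hcont k) (hbd k))
    apply Complex.continuous_ofReal.comp
    exact continuous_abs.rpow_const (fun x => Or.inr (by linarith [hs0 k]))
  have hterm : ∀ k, Integrable (fun w : ℝ => ‖b k‖ * (C / δ) * (|w| ^ (1 + 2 * s k) * Real.exp (-√c * |w|))) := by
    intro k
    apply Integrable.const_mul
    have := integrableOn_rpow_mul_exp_neg_mul_rpow (s := 1 + 2 * s k) (p := 1) (b := √c)
        (by linarith [hs0 k]) (by norm_num) hsc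
    simp only [Real.rpow_one] at this
    exact integrable_abs_aux this
  have hhintg : Integrable (fun w => ‖h w‖ * Real.exp (√c * |w|)) := by
    refine (integrable_finsetSum Finset.univ (fun k _ => hterm k)).mono' ?_ ?_
    · apply Continuous.aestronglyMeasurable
      fun_prop
    · refine Filter.Eventually.of_forall fun w => ?_
      rw [norm_mul, norm_norm, Real.norm_eq_abs, Real.abs_exp]
      calc ‖h w‖ * Real.exp (√c * |w|)
          ≤ (∑ k, ‖b k * ((|w| ^ (1 + 2 * s k) : ℝ) : ℂ) * lap (F k) ((w ^ 2 : ℝ) : ℂ)‖) *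
              Real.exp (√c * |w|) := by
            gcongr
            exact norm_sum_le _ _
        _ = ∑ k, ‖b k * ((|w| ^ (1 + 2 * s k) : ℝ) : ℂ) * lap (F k) ((w ^ 2 : ℝ) : ℂ)‖ *
              Real.exp (√c * |w|) := by rw [Finset.sum_mul]
        _ ≤ _ := by
            apply Finset.sum_le_sum
            intro k _
            rw [norm_mul, norm_mul, Complex.norm_real, Real.norm_eq_abs,
              abs_of_nonneg (Real.rpow_nonneg (abs_nonneg w) _)]
            calc _ ≤ ‖b k‖ * |w| ^ (1 + 2 * s k) * (C / δ * Real.exp (-(2 * √c * |w|))) *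
                  Real.exp (√c * |w|) := by
                  gcongr
                  exact lap_bound hC hc hδ (hbd k) w
              _ = ‖b k‖ * (C / δ) * (|w| ^ (1 + 2 * s k) * (Real.exp (-(2 * √c * |w|)) *
                  Real.exp (√c * |w|))) := by ring
              _ = _ := by rw [← Real.exp_add]; ring_nf
  have hIk : ∀ k, ∀ j : ℕ, IntegrableOn (fun w : ℝ => ((w ^ (1 + 2 * s k + 2 * j) : ℝ) : ℂ) *
      lap (F k) ((w ^ 2 : ℝ) : ℂ)) (Ioi 0) := by
    intro k j
    have h1 : IntegrableOn (fun w : ℝ => (C / δ) * (w ^ (1 + 2 * s k + 2 * j) * Real.exp (-(2 * √c) * w))) (Ioi 0) := by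
      apply Integrable.const_mul
      have := integrableOn_rpow_mul_exp_neg_mul_rpow (s := 1 + 2 * s k + 2 * j) (p := 1) (b := 2 * √c)
        (by have := hs0 k; have : (0:ℝ) ≤ j := Nat.cast_nonneg j; linarith) (by norm_num) (by linarith)
      simp only [Real.rpow_one] at this
      exact this
    refine Integrable.mono' h1 ?_ ?_
    · refine AEStronglyMeasurable.mul ?_ (lap_cont hC hc hδ (hcont k) (hbd k)).aestronglyMeasurable
      apply Measurable.aestronglyMeasurable
      fun_prop
    · filter_upwards [ae_restrict_mem measurableSet_Ioi] with w hw
      have hw : 0 < w := hw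
      rw [norm_mul, Complex.norm_real, Real.norm_eq_abs, abs_of_pos (Real.rpow_pos_of_pos hw _)]
      have := lap_bound hC hc hδ (hbd k) w
      rw [abs_of_pos hw] at this
      calc _ ≤ w ^ (1 + 2 * s k + 2 * j) * (C / δ * Real.exp (-(2 * √c * w))) := by gcongr
        _ = _ := by ring_nf
  have hhalf : ∀ j : ℕ, ∫ w in Ioi (0:ℝ), h w * (w : ℂ) ^ (2 * j) = 0 := by
    intro j
    have h1 : ∀ w ∈ Ioi (0:ℝ), h w * (w : ℂ) ^ (2 * j) =
        ∑ k, b k * (((w ^ (1 + 2 * s k + 2 * j) : ℝ) : ℂ) * lap (F k) ((w ^ 2 : ℝ) : ℂ)) := by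
      intro w hw
      have hw : 0 < w := hw
      simp only [hh]
      rw [Finset.sum_mul]
      apply Finset.sum_congr rfl
      intro k _
      have : w ^ (1 + 2 * s k + 2 * j) = w ^ (1 + 2 * s k) * w ^ (2 * j) := by
        rw [Real.rpow_add hw, ← Real.rpow_natCast w (2 * j)]
        push_cast; rfl
      rw [this, abs_of_pos hw]
      push_cast
      ring
    rw [setIntegral_congr_fun measurableSet_Ioi h1]
    rw [integral_finsetSum]
    · simp_rw [integral_const_mul]
      have h2 := hmom j
      have h3 : ∀ k, ∫ w in Ioi (0:ℝ), ((w ^ (1 + 2 * s k + 2 * j) : ℝ) : ℂ) *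
          lap (F k) ((w ^ 2 : ℝ) : ℂ) = (1 / 2 * Real.Gamma (1 + s k + j) : ℝ) *
          ∫ τ in Ioi (0:ℝ), F k τ * ((τ ^ (-1 - s k - j) : ℝ) : ℂ) := by
        intro k
        rw [lap_moment hC hc hδ (hcont k) (hbd k)
          (by have := hs0 k; have : (0:ℝ) ≤ j := Nat.cast_nonneg j; linarith)]
        congr 3
        · ring_nf
        · ext τ
          ring_nf
      simp_rw [h3]
      rw [← mul_zero (1 / 2 : ℂ), ← h2, Finset.mul_sum]
      apply Finset.sum_congr rfl
      intro k _
      push_cast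
      ring
    · intro k _
      exact (hIk k j).const_mul _
  have hmomint : ∀ m : ℕ, Integrable (fun w : ℝ => h w * (w : ℂ) ^ m) := by
    intro m
    have : Integrable (fun w : ℝ => ((m.factorial : ℝ) / √c ^ m) * (‖h w‖ * Real.exp (√c * |w|))) :=
      hhintg.const_mul _
    refine this.mono' ?_ (Filter.Eventually.of_forall fun w => ?_)
    · apply Continuous.aestronglyMeasurable
      fun_prop
    · rw [norm_mul, norm_pow, Complex.norm_real, Real.norm_eq_abs]
      have h1 := Real.pow_div_factorial_le_exp (√c * |w|) (by positivity) m
      have h2 : |w| ^ m ≤ ((m.factorial : ℝ) / √c ^ m) * Real.exp (√c * |w|) := by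
        rw [div_mul_eq_mul_div, le_div_iff₀ (by positivity)]
        rw [div_le_iff₀ (by positivity), mul_pow] at h1
        linarith
      calc ‖h w‖ * |w| ^ m ≤ ‖h w‖ * (((m.factorial : ℝ) / √c ^ m) * Real.exp (√c * |w|)) := by gcongr
        _ = _ := by ring
  have heven : ∀ w, h (-w) = h w := by
    intro w
    simp [hh]
  have hmoments : ∀ m : ℕ, ∫ w, h w * (w : ℂ) ^ m = 0 := by
    intro m
    rw [← integral_add_compl (measurableSet_Ioi (a := (0:ℝ))) (hmomint m), compl_Ioi]
    have hneg := integral_comp_neg_Ioi (0:ℝ) (fun w : ℝ => h w * (w : ℂ) ^ m)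
    rw [neg_zero] at hneg
    rw [← hneg]
    have : ∀ w : ℝ, h (-w) * ((-w : ℝ) : ℂ) ^ m = (-1) ^ m * (h w * (w : ℂ) ^ m) := by
      intro w
      rw [heven]; push_cast; rw [neg_pow]; ring
    simp_rw [this]
    rw [integral_const_mul]
    rcases Nat.even_or_odd m with he | ho
    · obtain ⟨j, hj⟩ := he
      rw [hj, ← two_mul, hhalf j]; simp
    · rw [ho.neg_one_pow]; ring
  have hzero := moments_zero hsc hhc hhintg hmoments
  have hsep := separation hs0 hs1 hinj hb (L := fun k => lap (F k))
    (fun k => lap_analytic hC hc hδ (hcont k) (hbd k)) (by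
      filter_upwards [self_mem_nhdsWithin] with x hx
      have hx : 0 < x := hx
      have h1 := hzero (√x)
      simp only [hh] at h1
      rw [Real.sq_sqrt hx.le, abs_of_nonneg (Real.sqrt_nonneg x)] at h1
      have h2 : ∀ k, (√x) ^ (1 + 2 * s k) = √x * x ^ s k := by
        intro k
        rw [Real.rpow_add (Real.sqrt_pos.2 hx), Real.rpow_one, Real.rpow_mul (Real.sqrt_nonneg x)]
        norm_num [Real.sq_sqrt hx.le]
      simp_rw [h2] at h1
      have h3 : ((√x : ℝ) : ℂ) * ∑ k, b k * ((x ^ s k : ℝ) : ℂ) * lap (F k) x = 0 := by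
        rw [← h1, Finset.mul_sum]
        apply Finset.sum_congr rfl
        intro k _
        push_cast; ring
      rcases mul_eq_zero.1 h3 with h4 | h4
      · exact absurd h4 (by exact_mod_cast (Real.sqrt_pos.2 hx).ne')
      · exact h4)
  intro k
  exact lap_inj hC hc hδ (hcont k) (hbd k) (hsep k)

/-- radial kernel `τ^{-a} e^{-q/(4τ)}`, extended by zero. -/
def kap (a q τ : ℝ) : ℝ := if 0 < τ then τ ^ (-a) * Real.exp (-q / (4 * τ)) else 0

theorem kap_pos {a q τ : ℝ} (h : 0 < τ) : kap a q τ = τ ^ (-a) * Real.exp (-q / (4 * τ)) := by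
  simp [kap, h]

theorem kap_neg {a q τ : ℝ} (h : ¬ 0 < τ) : kap a q τ = 0 := by
  simp [kap, h]

theorem kap_nonneg (a q τ : ℝ) : 0 ≤ kap a q τ := by
  unfold kap
  split_ifs with h
  · have := Real.rpow_nonneg h.le (-a)
    positivity
  · exact le_rfl

theorem kap_succ {a q τ : ℝ} (h : 0 < τ) : kap (a + 1) q τ = kap a q τ / τ := by
  rw [kap_pos h, kap_pos h, neg_add, Real.rpow_add h, Real.rpow_neg_one]
  ring

theorem rpow_le_exp_aux {a r : ℝ} (ha : 0 ≤ a) (hr : 0 < r) :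
    ∃ M : ℝ, 0 < M ∧ ∀ u : ℝ, 0 < u → u ^ a ≤ M * Real.exp (r * u) := by
  set m := ⌈a⌉₊
  refine ⟨1 + m.factorial / r ^ m, by positivity, fun u hu => ?_⟩
  have h1 : u ^ a ≤ 1 + u ^ m := by
    rcases le_total u 1 with h | h
    · have := Real.rpow_le_one hu.le h ha
      have : 0 ≤ u ^ m := by positivity
      linarith
    · have := Real.rpow_le_rpow_of_exponent_le h (Nat.le_ceil a)
      rw [Real.rpow_natCast] at this
      linarith
  have h2 := Real.pow_div_factorial_le_exp (r * u) (by positivity) m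
  rw [div_le_iff₀ (by positivity), mul_pow] at h2
  have h3 : u ^ m ≤ m.factorial / r ^ m * Real.exp (r * u) := by
    rw [div_mul_eq_mul_div, le_div_iff₀ (by positivity)]
    linarith
  have h4 : 1 ≤ Real.exp (r * u) := Real.one_le_exp (by positivity)
  nlinarith

theorem kap_bound {a r τ0 : ℝ} (ha : 0 ≤ a) (hr : 0 < r) (hτ0 : 0 < τ0) :
    ∃ M : ℝ, 0 < M ∧ ∀ q τ : ℝ, 0 ≤ q → 0 < τ → (r ≤ q ∨ τ0 ≤ τ) →
      kap a q τ ≤ M * Real.exp (-(r / 8) / τ) := by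
  obtain ⟨M1, hM1, h1⟩ := rpow_le_exp_aux ha (show 0 < r / 8 by linarith)
  refine ⟨M1 + τ0 ^ (-a) * Real.exp ((r / 8) / τ0), by positivity, fun q τ hq hτ h => ?_⟩
  rw [kap_pos hτ]
  rcases h with h | h
  · have e1 : τ ^ (-a) ≤ M1 * Real.exp (r / 8 / τ) := by
      have := h1 τ⁻¹ (by positivity)
      rw [Real.inv_rpow hτ.le, ← Real.rpow_neg hτ.le] at this
      exact this
    have e2 : Real.exp (-q / (4 * τ)) ≤ Real.exp (-r / (4 * τ)) := by
      apply Real.exp_le_exp.2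
      gcongr
    calc τ ^ (-a) * Real.exp (-q / (4 * τ)) ≤ M1 * Real.exp (r / 8 / τ) * Real.exp (-r / (4 * τ)) := by
          gcongr
      _ = M1 * (Real.exp (r / 8 / τ) * Real.exp (-r / (4 * τ))) := by ring
      _ = M1 * Real.exp (-(r / 8) / τ) := by
          rw [← Real.exp_add]; congr 2; field_simp; ring
      _ ≤ _ := by
          gcongr
          have : 0 < τ0 ^ (-a) * Real.exp ((r / 8) / τ0) := by positivity
          linarith
  · have e1 : τ ^ (-a) ≤ τ0 ^ (-a) := Real.rpow_le_rpow_of_nonpos hτ0 h (by linarith)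
    have e2 : Real.exp (-q / (4 * τ)) ≤ 1 := Real.exp_le_one_iff.2 (by
      rw [neg_div]
      have : 0 ≤ q / (4 * τ) := by positivity
      linarith)
    have e3 : 1 ≤ Real.exp (r / 8 / τ0) * Real.exp (-(r / 8) / τ) := by
      rw [← Real.exp_add]
      apply Real.one_le_exp
      rw [neg_div]
      have : r / 8 / τ ≤ r / 8 / τ0 := by gcongr
      linarith
    have e4 : 0 < τ0 ^ (-a) := Real.rpow_pos_of_pos hτ0 _
    calc τ ^ (-a) * Real.exp (-q / (4 * τ)) ≤ τ0 ^ (-a) * 1 := by gcongr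
      _ ≤ τ0 ^ (-a) * (Real.exp (r / 8 / τ0) * Real.exp (-(r / 8) / τ)) := by gcongr
      _ = τ0 ^ (-a) * Real.exp (r / 8 / τ0) * Real.exp (-(r / 8) / τ) := by ring
      _ ≤ _ := by gcongr; linarith

theorem kap_bound' {a r τ0 : ℝ} (ha : 0 ≤ a) (hr : 0 < r) (hτ0 : 0 < τ0) :
    ∃ M : ℝ, 0 < M ∧ ∀ q τ : ℝ, 0 ≤ q → (r ≤ q ∨ τ0 ≤ τ) → |kap a q τ| ≤ M := by
  obtain ⟨M, hM, h⟩ := kap_bound ha hr hτ0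
  refine ⟨M, hM, fun q τ hq hh => ?_⟩
  rw [abs_of_nonneg (kap_nonneg _ _ _)]
  by_cases hτ : 0 < τ
  · refine (h q τ hq hτ hh).trans ?_
    have : Real.exp (-(r / 8) / τ) ≤ 1 := Real.exp_le_one_iff.2 (by
      rw [neg_div]
      have : 0 ≤ r / 8 / τ := by positivity
      linarith)
    nlinarith
  · rw [kap_neg hτ]; exact hM.le

theorem kap_hasDeriv_q (a q τ : ℝ) :
    HasDerivAt (fun q => kap a q τ) (-(1/4) * kap (a + 1) q τ) q := by
  by_cases hτ : 0 < τ
  · have h1 : HasDerivAt (fun q : ℝ => -q / (4 * τ)) (-1 / (4 * τ)) q :=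
      ((hasDerivAt_id q).neg).div_const _
    have h2 := (h1.exp).const_mul (τ ^ (-a))
    have h3 : (fun q => kap a q τ) = fun q => τ ^ (-a) * Real.exp (-q / (4 * τ)) := by
      ext q; exact kap_pos hτ
    rw [h3]
    refine h2.congr_deriv ?_
    rw [kap_succ hτ, kap_pos hτ]
    field_simp
  · have h3 : (fun q => kap a q τ) = fun q => 0 := by
      ext q; exact kap_neg hτ
    rw [h3, kap_neg hτ, mul_zero]
    exact hasDerivAt_const _ _

open scoped Topology in
theorem kap_hasDeriv_t {a q τ : ℝ} (ha : 0 ≤ a) (hq : 0 ≤ q) (h : 0 < τ ∨ 0 < q) :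
    HasDerivAt (fun τ => kap a q τ) (-a * kap (a + 1) q τ + q / 4 * kap (a + 2) q τ) τ := by
  rcases lt_trichotomy 0 τ with hτ | hτ | hτ
  · have h1 : HasDerivAt (fun τ : ℝ => -q / (4 * τ)) (q / (4 * τ ^ 2)) τ := by
      have := (hasDerivAt_inv hτ.ne').const_mul (-q / 4)
      refine (this.congr_of_eventuallyEq ?_).congr_deriv ?_
      · filter_upwards with x
        rw [div_mul_eq_div_div]; rfl
      · field_simp
    have h2 := (Real.hasDerivAt_rpow_const (p := -a) (Or.inl hτ.ne')).mul h1.exp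
    refine (h2.congr_of_eventuallyEq ?_).congr_deriv ?_
    · filter_upwards [Ioi_mem_nhds hτ] with x hx
      exact kap_pos hx
    · have hA : kap (a + 1) q τ = kap a q τ / τ := kap_succ hτ
      have hB : kap (a + 2) q τ = kap a q τ / τ / τ := by
        rw [show a + 2 = a + 1 + 1 by ring, kap_succ hτ, kap_succ hτ]
      rw [hA, hB, kap_pos hτ, Real.rpow_sub_one hτ.ne']
      field_simp
  · subst hτ
    have hq : 0 < q := by simpa using h
    rw [kap_neg (lt_irrefl _), kap_neg (lt_irrefl _), mul_zero, mul_zero, add_zero]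
    obtain ⟨M, hM, hb⟩ := kap_bound' (a := a + 2) (by linarith) hq one_pos
    rw [hasDerivAt_iff_isLittleO]
    simp only [kap_neg (lt_irrefl _), sub_zero, smul_zero]
    have h1 : (fun τ => kap a q τ) =O[𝓝 0] (fun τ : ℝ => τ ^ 2) := by
      refine Asymptotics.IsBigO.of_bound M (Filter.Eventually.of_forall fun τ => ?_)
      by_cases hτ : 0 < τ
      · have e := hb q τ hq.le (Or.inl le_rfl)
        have e2 : kap a q τ = kap (a + 2) q τ * τ ^ 2 := by
          rw [show a + 2 = a + 1 + 1 by ring, kap_succ hτ, kap_succ hτ]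
          field_simp
        rw [e2, norm_mul]
        gcongr
        exact e
      · rw [kap_neg hτ, norm_zero]; positivity
    refine h1.trans_isLittleO ?_
    have := Asymptotics.isLittleO_pow_id (𝕜 := ℝ) (n := 2) (by norm_num)
    simpa using this
  · rw [kap_neg hτ.not_gt, kap_neg hτ.not_gt, mul_zero, mul_zero, add_zero]
    refine (hasDerivAt_const τ (0:ℝ)).congr_of_eventuallyEq ?_
    filter_upwards [Iio_mem_nhds hτ] with x hx
    exact kap_neg (not_lt.2 (le_of_lt hx))

theorem kap_measurable (a : ℝ) : Measurable (fun p : ℝ × ℝ => kap a p.1 p.2) := by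
  unfold kap
  refine Measurable.ite (measurableSet_lt measurable_const measurable_snd) ?_ measurable_const
  fun_prop

section pde
variable {n : ℕ}

theorem sqNorm_nonneg (z : Fin n → ℝ) : 0 ≤ sqNorm z := Finset.sum_nonneg fun i _ => sq_nonneg _

theorem norm_sq_le_sqNorm (z : Fin n → ℝ) : ‖z‖ ^ 2 ≤ sqNorm z := by
  have : ‖z‖ ≤ √(sqNorm z) := by
    rw [pi_norm_le_iff_of_nonneg (Real.sqrt_nonneg _)]
    intro i
    rw [Real.norm_eq_abs]
    apply Real.abs_le_sqrt
    exact Finset.single_le_sum (f := fun i => z i ^ 2) (fun i _ => sq_nonneg _) (Finset.mem_univ i)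
  calc ‖z‖ ^ 2 ≤ √(sqNorm z) ^ 2 := by gcongr
    _ = _ := Real.sq_sqrt (sqNorm_nonneg z)

theorem sqNorm_add (z : Fin n → ℝ) (i : Fin n) (h : ℝ) :
    sqNorm (z + h • Pi.single i (1:ℝ)) = sqNorm z + (2 * h * z i + h ^ 2) := by
  classical
  unfold sqNorm
  have : ∀ j, (z + h • Pi.single i (1:ℝ) : Fin n → ℝ) j ^ 2 =
      z j ^ 2 + (if j = i then (2 * h * z i + h ^ 2) else 0) := by
    intro j
    by_cases hj : j = i
    · subst hj; simp; ring
    · simp [hj]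
  simp_rw [this, Finset.sum_add_distrib]
  simp

theorem sqNorm_continuous : Continuous (sqNorm : (Fin n → ℝ) → ℝ) := by
  unfold sqNorm; fun_prop

/-- admissible kernels -/
def Ker (f : (Fin n → ℝ) → ℝ → ℝ) : Prop :=
  Measurable (fun p : (Fin n → ℝ) × ℝ => f p.1 p.2) ∧
  ∀ r τ0 : ℝ, 0 < r → 0 < τ0 → ∃ M : ℝ, 0 < M ∧ ∀ z τ, (r ≤ ‖z‖ ∨ τ0 ≤ τ) →
    |f z τ| ≤ M * (1 + ‖z‖) ^ 2

theorem Ker.add {f g : (Fin n → ℝ) → ℝ → ℝ} (hf : Ker f) (hg : Ker g) :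
    Ker (fun z τ => f z τ + g z τ) := by
  refine ⟨hf.1.add hg.1, fun r τ0 hr hτ => ?_⟩
  obtain ⟨M, hM, h⟩ := hf.2 r τ0 hr hτ
  obtain ⟨M', hM', h'⟩ := hg.2 r τ0 hr hτ
  refine ⟨M + M', by positivity, fun z τ hz => ?_⟩
  calc _ ≤ |f z τ| + |g z τ| := abs_add_le _ _
    _ ≤ M * (1 + ‖z‖) ^ 2 + M' * (1 + ‖z‖) ^ 2 := add_le_add (h z τ hz) (h' z τ hz)
    _ = _ := by ring

theorem Ker.smul {f : (Fin n → ℝ) → ℝ → ℝ} (c : ℝ) (hf : Ker f) :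
    Ker (fun z τ => c * f z τ) := by
  refine ⟨hf.1.const_mul c, fun r τ0 hr hτ => ?_⟩
  obtain ⟨M, hM, h⟩ := hf.2 r τ0 hr hτ
  refine ⟨(|c| + 1) * M, by positivity, fun z τ hz => ?_⟩
  rw [abs_mul]
  calc |c| * |f z τ| ≤ (|c| + 1) * (M * (1 + ‖z‖) ^ 2) := by
        gcongr
        · linarith
        · exact h z τ hz
    _ = _ := by ring

theorem Ker.zero : Ker (fun (_ : Fin n → ℝ) _ => 0) :=
  ⟨measurable_const, fun r τ0 hr hτ => ⟨1, one_pos, fun z τ hz => by simp; positivity⟩⟩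

theorem Ker.sum {ι : Type*} (S : Finset ι) {f : ι → (Fin n → ℝ) → ℝ → ℝ} (hf : ∀ i, Ker (f i)) :
    Ker (fun z τ => ∑ i ∈ S, f i z τ) := by
  classical
  induction S using Finset.induction_on with
  | empty => simpa using Ker.zero
  | insert i S hi ih =>
    simp_rw [Finset.sum_insert hi]
    exact (hf i).add ih

theorem Ker.mono {a : ℝ} (ha : 0 ≤ a) (i : Fin n) {j : ℕ} (hj : j ≤ 2) :
    Ker (fun z τ => z i ^ j * kap a (sqNorm z) τ) := by
  constructor
  · have h1 : Measurable (fun p : (Fin n → ℝ) × ℝ => ((sqNorm p.1, p.2) : ℝ × ℝ)) :=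
      (sqNorm_continuous.measurable.comp measurable_fst).prodMk measurable_snd
    refine Measurable.mul ?_ ((kap_measurable a).comp h1)
    fun_prop
  · intro r τ0 hr hτ0
    obtain ⟨M, hM, h⟩ := kap_bound' ha (show 0 < r ^ 2 by positivity) hτ0
    refine ⟨M, hM, fun z τ hz => ?_⟩
    have e := h (sqNorm z) τ (sqNorm_nonneg z) (hz.imp_left fun h => by
      refine le_trans ?_ (norm_sq_le_sqNorm z)
      gcongr)
    rw [abs_mul, abs_pow, mul_comm]
    have e2 : |z i| ≤ 1 + ‖z‖ := by
      have := norm_le_pi_norm z i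
      rw [Real.norm_eq_abs] at this
      linarith
    gcongr
    calc |z i| ^ j ≤ (1 + ‖z‖) ^ j := by gcongr
      _ ≤ (1 + ‖z‖) ^ 2 := by
        gcongr
        linarith [norm_nonneg z]

theorem Ker.kap {a : ℝ} (ha : 0 ≤ a) : Ker (fun (z : Fin n → ℝ) τ => kap a (sqNorm z) τ) := by
  constructor
  · have h1 : Measurable (fun p : (Fin n → ℝ) × ℝ => ((sqNorm p.1, p.2) : ℝ × ℝ)) :=
      (sqNorm_continuous.measurable.comp measurable_fst).prodMk measurable_snd
    exact ((kap_measurable a).comp h1)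
  · intro r τ0 hr hτ0
    obtain ⟨M, hM, h⟩ := kap_bound' ha (show 0 < r ^ 2 by positivity) hτ0
    refine ⟨M, hM, fun z τ hz => ?_⟩
    have e := h (sqNorm z) τ (sqNorm_nonneg z) (hz.imp_left fun h => by
      refine le_trans ?_ (norm_sq_le_sqNorm z)
      gcongr)
    have : 1 ≤ (1 + ‖z‖) ^ 2 := by nlinarith [norm_nonneg z]
    nlinarith

/-- the class of densities -/
structure Good (𝒪 : Set (Fin n → ℝ)) (T T₁ δ : ℝ) (w : SpaceTime n → ℂ) : Prop where
  meas : Measurable w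
  cont : ContinuousOn w {p | p.2 < T₁}
  decay : ∃ C : ℝ, 0 < C ∧ ∀ y t, ‖w (y, t)‖ ≤ C * (1 + ‖y‖) ^ (-((n : ℝ) + 3)) * Real.exp (δ * t)
  van : ∀ x ∈ 𝒪, ∀ t, -T < t → w (x, t) = 0
  supp : ∀ x t, T₁ ≤ t → w (x, t) = 0

variable {𝒪 : Set (Fin n → ℝ)} {T T₁ δ : ℝ}

theorem Good.int (hδ : 0 < δ) {w : SpaceTime n → ℂ} (hw : Good 𝒪 T T₁ δ w) :
    Integrable (fun p : SpaceTime n => (1 + ‖p.1‖) ^ 2 * ‖w p‖) := by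
  obtain ⟨C, hC, hd⟩ := hw.decay
  have h1 : Integrable (fun y : Fin n → ℝ => (1 + ‖y‖) ^ (-((n : ℝ) + 1))) :=
    integrable_one_add_norm (by simp)
  have h2 : Integrable ((Iio T₁).indicator fun t : ℝ => C * Real.exp (δ * t)) := by
    rw [integrable_indicator_iff measurableSet_Iio]
    apply Integrable.const_mul
    exact (integrableOn_exp_mul_Iic hδ T₁).mono_set Iio_subset_Iic_self
  refine (h1.mul_prod h2).mono' ?_ (Filter.Eventually.of_forall fun p => ?_)
  · have := hw.meas
    apply Measurable.aestronglyMeasurable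
    fun_prop
  · obtain ⟨y, t⟩ := p
    have hy : 0 < 1 + ‖y‖ := by positivity
    rw [norm_mul, norm_norm, Real.norm_eq_abs, abs_of_nonneg (by positivity)]
    by_cases ht : t < T₁
    · simp only [indicator, mem_Iio, ht, if_true]
      have e : (1 + ‖y‖) ^ 2 * (1 + ‖y‖) ^ (-((n : ℝ) + 3)) = (1 + ‖y‖) ^ (-((n : ℝ) + 1)) := by
        rw [← Real.rpow_natCast, ← Real.rpow_add hy]
        congr 1; push_cast; ring
      calc (1 + ‖y‖) ^ 2 * ‖w (y, t)‖
          ≤ (1 + ‖y‖) ^ 2 * (C * (1 + ‖y‖) ^ (-((n : ℝ) + 3)) * Real.exp (δ * t)) := by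
            gcongr; exact hd y t
        _ = ((1 + ‖y‖) ^ 2 * (1 + ‖y‖) ^ (-((n : ℝ) + 3))) * (C * Real.exp (δ * t)) := by ring
        _ = _ := by rw [e]
    · rw [hw.supp y t (not_lt.1 ht)]
      simp [indicator, ht]

/-- space-time convolution -/
def J (f : (Fin n → ℝ) → ℝ → ℝ) (w : SpaceTime n → ℂ) (p : SpaceTime n) : ℂ :=
  ∫ q : SpaceTime n, ((f (p.1 - q.1) (p.2 - q.2) : ℝ) : ℂ) * w q

theorem J_meas {f : (Fin n → ℝ) → ℝ → ℝ} (hf : Ker f) {w : SpaceTime n → ℂ}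
    (hw : Good 𝒪 T T₁ δ w) (p : SpaceTime n) :
    AEStronglyMeasurable (fun q : SpaceTime n => ((f (p.1 - q.1) (p.2 - q.2) : ℝ) : ℂ) * w q) volume := by
  apply Measurable.aestronglyMeasurable
  refine Measurable.mul ?_ hw.meas
  apply Complex.measurable_ofReal.comp
  exact hf.1.comp (show Measurable (fun q : SpaceTime n => (p.1 - q.1, p.2 - q.2)) by fun_prop)

theorem dom_aux {f : (Fin n → ℝ) → ℝ → ℝ} (hf : Ker f) {w : SpaceTime n → ℂ}
    (hw : Good 𝒪 T T₁ δ w) {p : SpaceTime n} {r : ℝ} (hr : 0 < r) (hball : Metric.ball p.1 (2 * r) ⊆ 𝒪)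
    {τ0 : ℝ} (hτ0 : 0 < τ0) (hτ : 2 * τ0 ≤ p.2 + T) :
    ∃ M : ℝ, 0 < M ∧ ∀ p' : SpaceTime n, ‖p'.1 - p.1‖ ≤ r → |p'.2 - p.2| ≤ τ0 → ∀ q : SpaceTime n,
      ‖((f (p'.1 - q.1) (p'.2 - q.2) : ℝ) : ℂ) * w q‖ ≤ M * ((1 + ‖q.1‖) ^ 2 * ‖w q‖) ∧
      (w q ≠ 0 → (r ≤ ‖p'.1 - q.1‖ ∨ τ0 ≤ p'.2 - q.2)) := by
  obtain ⟨M, hM, h⟩ := hf.2 r τ0 hr hτ0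
  refine ⟨M * (1 + ‖p.1‖ + r) ^ 2, by positivity, fun p' h1 h2 q => ?_⟩
  have key : w q ≠ 0 → (r ≤ ‖p'.1 - q.1‖ ∨ τ0 ≤ p'.2 - q.2) := by
    intro hq
    by_cases ht : -T < q.2
    · left
      have : q.1 ∉ Metric.ball p.1 (2 * r) := fun hb => hq (hw.van q.1 (hball hb) q.2 ht)
      rw [Metric.mem_ball, dist_comm, dist_eq_norm, not_lt] at this
      have h3 : ‖p.1 - q.1‖ ≤ ‖p'.1 - q.1‖ + ‖p'.1 - p.1‖ := by
        have : p.1 - q.1 = (p'.1 - q.1) - (p'.1 - p.1) := by abel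
        rw [this]; exact norm_sub_le _ _
      linarith
    · right
      rw [abs_le] at h2
      linarith [h2.1]
  refine ⟨?_, key⟩
  by_cases hq : w q = 0
  · simp [hq]
  · have e := h _ _ (key hq)
    rw [norm_mul, Complex.norm_real, Real.norm_eq_abs]
    have e2 : 1 + ‖p'.1 - q.1‖ ≤ (1 + ‖p.1‖ + r) * (1 + ‖q.1‖) := by
      have a1 : ‖p'.1 - q.1‖ ≤ ‖p'.1 - p.1‖ + ‖p.1‖ + ‖q.1‖ := by
        have : p'.1 - q.1 = (p'.1 - p.1) + p.1 - q.1 := by abel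
        rw [this]
        exact (norm_sub_le _ _).trans (by gcongr; exact norm_add_le _ _)
      nlinarith [norm_nonneg p.1, norm_nonneg q.1]
    calc |f (p'.1 - q.1) (p'.2 - q.2)| * ‖w q‖ ≤ (M * ((1 + ‖p.1‖ + r) * (1 + ‖q.1‖)) ^ 2) * ‖w q‖ := by
          gcongr
          exact e.trans (by gcongr)
      _ = _ := by ring

theorem radius_aux (hO : IsOpen 𝒪) {p : SpaceTime n} (hp : p.1 ∈ 𝒪) (ht : -T < p.2) :
    ∃ r τ0 : ℝ, 0 < r ∧ 0 < τ0 ∧ Metric.ball p.1 (2 * r) ⊆ 𝒪 ∧ 2 * τ0 ≤ p.2 + T := by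
  obtain ⟨ε, hε, hb⟩ := Metric.isOpen_iff.1 hO p.1 hp
  exact ⟨ε / 2, (p.2 + T) / 2, by linarith, by linarith, by simpa [mul_div_cancel₀] using hb, by linarith⟩

theorem J_int (hδ : 0 < δ) (hO : IsOpen 𝒪) {f : (Fin n → ℝ) → ℝ → ℝ} (hf : Ker f) {w : SpaceTime n → ℂ}
    (hw : Good 𝒪 T T₁ δ w) {p : SpaceTime n} (hp : p.1 ∈ 𝒪) (ht : -T < p.2) :
    Integrable (fun q : SpaceTime n => ((f (p.1 - q.1) (p.2 - q.2) : ℝ) : ℂ) * w q) := by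
  obtain ⟨r, τ0, hr, hτ0, hb, hτ⟩ := radius_aux hO hp ht
  obtain ⟨M, hM, h⟩ := dom_aux hf hw hr hb hτ0 hτ
  refine ((hw.int hδ).const_mul M).mono' (J_meas hf hw p) (Filter.Eventually.of_forall fun q => ?_)
  exact (h p (by simpa using hr.le) (by simpa using hτ0.le) q).1

open scoped Topology in
theorem J_deriv (hδ : 0 < δ) (hO : IsOpen 𝒪) {f f' : (Fin n → ℝ) → ℝ → ℝ} (hf : Ker f) (hf' : Ker f')
    (d : SpaceTime n)
    (hder : ∀ z τ, (0 < τ ∨ z ≠ 0) → HasDerivAt (fun h : ℝ => f (z + h • d.1) (τ + h * d.2)) (f' z τ) 0)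
    {w : SpaceTime n → ℂ}
    (hw : Good 𝒪 T T₁ δ w) {p : SpaceTime n} (hp : p.1 ∈ 𝒪) (ht : -T < p.2) :
    HasDerivAt (fun h : ℝ => J f w (p.1 + h • d.1, p.2 + h * d.2)) (J f' w p) 0 := by
  obtain ⟨r, τ0, hr, hτ0, hb, hτ⟩ := radius_aux hO hp ht
  obtain ⟨M, hM, hM'⟩ := dom_aux hf' hw hr hb hτ0 hτ
  have hS : {h : ℝ | ‖h • d.1‖ < r ∧ |h * d.2| < τ0} ∈ 𝓝 (0:ℝ) := by
    apply IsOpen.mem_nhds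
    · have o1 : IsOpen {h : ℝ | ‖h • d.1‖ < r} := isOpen_lt (by fun_prop) (by fun_prop)
      have o2 : IsOpen {h : ℝ | |h * d.2| < τ0} := isOpen_lt (by fun_prop) (by fun_prop)
      exact o1.inter o2
    · simp [hr, hτ0]
  have key := hasDerivAt_integral_of_dominated_loc_of_deriv_le (μ := (volume : Measure (SpaceTime n)))
    (𝕜 := ℝ) (x₀ := (0:ℝ))
    (F := fun (h : ℝ) (q : SpaceTime n) =>
      ((f (p.1 + h • d.1 - q.1) (p.2 + h * d.2 - q.2) : ℝ) : ℂ) * w q)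
    (F' := fun (h : ℝ) (q : SpaceTime n) =>
      ((f' (p.1 + h • d.1 - q.1) (p.2 + h * d.2 - q.2) : ℝ) : ℂ) * w q)
    (bound := fun q => M * ((1 + ‖q.1‖) ^ 2 * ‖w q‖)) hS
    (Filter.Eventually.of_forall fun h => J_meas hf hw (p.1 + h • d.1, p.2 + h * d.2))
    (by simpa using J_int hδ hO hf hw hp ht)
    (J_meas hf' hw (p.1 + (0:ℝ) • d.1, p.2 + 0 * d.2))
    (Filter.Eventually.of_forall fun q h hh => by
      exact (hM' (p.1 + h • d.1, p.2 + h * d.2) (by simpa using hh.1.le) (by simpa using hh.2.le) q).1)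
    ((hw.int hδ).const_mul M)
    (Filter.Eventually.of_forall fun q h hh => by
      by_cases hq : w q = 0
      · simp only [hq, mul_zero]; exact hasDerivAt_const _ _
      · have hg := (hM' (p.1 + h • d.1, p.2 + h * d.2) (by simpa using hh.1.le)
          (by simpa using hh.2.le) q).2 hq
        have h1 := hder (p.1 + h • d.1 - q.1) (p.2 + h * d.2 - q.2) (by
          rcases hg with hg | hg
          · right
            intro h0
            simp only at hg
            rw [h0, norm_zero] at hg
            linarith
          · left; simp only at hg; linarith)
        have h2 : HasDerivAt (fun h' : ℝ => f (p.1 + h' • d.1 - q.1) (p.2 + h' * d.2 - q.2))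
            (f' (p.1 + h • d.1 - q.1) (p.2 + h * d.2 - q.2)) h := by
          have h3 : HasDerivAt (fun h' : ℝ => h' - h) 1 h := (hasDerivAt_id h).sub_const h
          have h4 := HasDerivAt.comp_of_eq h h1 h3 (by simp)
          rw [mul_one] at h4
          refine h4.congr_of_eventuallyEq (Filter.Eventually.of_forall fun x => ?_)
          simp only [Function.comp]
          congr 1
          · rw [sub_smul]; abel
          · ring
        exact (h2.ofReal_comp).mul_const _)
  have := key.2
  simpa [J] using this

open scoped Topology in
theorem J_step (hδ : 0 < δ) (hO : IsOpen 𝒪) {N : ℕ} {f f' : Fin N → (Fin n → ℝ) → ℝ → ℝ}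
    (hf : ∀ k, Ker (f k)) (hf' : ∀ k, Ker (f' k))
    (d : SpaceTime n)
    (hder : ∀ k z τ, (0 < τ ∨ z ≠ 0) →
      HasDerivAt (fun h : ℝ => f k (z + h • d.1) (τ + h * d.2)) (f' k z τ) 0)
    {w : Fin N → SpaceTime n → ℂ} (hw : ∀ k, Good 𝒪 T T₁ δ (w k)) (c : Fin N → ℂ)
    (hz : ∀ p : SpaceTime n, p.1 ∈ 𝒪 → p.2 ∈ Ioo (-T) T₁ → ∑ k, c k * J (f k) (w k) p = 0) :
    ∀ p : SpaceTime n, p.1 ∈ 𝒪 → p.2 ∈ Ioo (-T) T₁ → ∑ k, c k * J (f' k) (w k) p = 0 := by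
  intro p hp ht
  have h1 : HasDerivAt (fun h : ℝ => ∑ k, c k * J (f k) (w k) (p.1 + h • d.1, p.2 + h * d.2))
      (∑ k, c k * J (f' k) (w k) p) 0 := by
    apply HasDerivAt.fun_sum
    intro k _
    exact (J_deriv hδ hO (hf k) (hf' k) d (hder k) (hw k) hp ht.1).const_mul _
  have h2 : (fun h : ℝ => ∑ k, c k * J (f k) (w k) (p.1 + h • d.1, p.2 + h * d.2)) =ᶠ[𝓝 0] fun _ => 0 := by
    have hS : {h : ℝ | p.1 + h • d.1 ∈ 𝒪 ∧ p.2 + h * d.2 ∈ Ioo (-T) T₁} ∈ 𝓝 (0:ℝ) := by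
      apply IsOpen.mem_nhds
      · exact (hO.preimage (by fun_prop)).inter (isOpen_Ioo.preimage (by fun_prop))
      · simpa using ⟨hp, ht⟩
    filter_upwards [hS] with h hh
    exact hz _ hh.1 hh.2
  exact h1.unique ((hasDerivAt_const (0:ℝ) (0:ℂ)).congr_of_eventuallyEq h2)

end pde

section rec
variable {n : ℕ} {𝒪 : Set (Fin n → ℝ)} {T T₁ δ : ℝ}

theorem pos_aux {z : Fin n → ℝ} {τ : ℝ} (h : 0 < τ ∨ z ≠ 0) : 0 < τ ∨ 0 < sqNorm z := by
  refine h.imp_right fun hz => ?_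
  refine lt_of_lt_of_le ?_ (norm_sq_le_sqNorm z)
  have := norm_pos_iff.2 hz
  positivity

theorem kap_dir (a : ℝ) (i : Fin n) (z : Fin n → ℝ) (τ : ℝ) :
    HasDerivAt (fun h : ℝ => kap a (sqNorm (z + h • Pi.single i (1:ℝ))) (τ + h * 0))
      (-(1/2) * (z i ^ 1 * kap (a + 1) (sqNorm z) τ)) 0 := by
  simp_rw [sqNorm_add, mul_zero, add_zero]
  have h1 : HasDerivAt (fun h : ℝ => sqNorm z + (2 * h * z i + h ^ 2)) (2 * z i) 0 := by
    have a1 := (((hasDerivAt_id (0:ℝ)).const_mul 2).mul_const (z i))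
    have a2 := hasDerivAt_pow 2 (0:ℝ)
    have := (a1.add a2).const_add (sqNorm z)
    refine this.congr_deriv ?_
    simp
  have h2 := HasDerivAt.comp_of_eq (0:ℝ) (kap_hasDeriv_q a (sqNorm z) τ) h1 (by simp)
  refine h2.congr_deriv ?_
  ring

theorem kap_dir2 (a : ℝ) (i : Fin n) (z : Fin n → ℝ) (τ : ℝ) :
    HasDerivAt (fun h : ℝ => -(1/2) * ((z + h • Pi.single i (1:ℝ) : Fin n → ℝ) i ^ 1 *
        kap a (sqNorm (z + h • Pi.single i (1:ℝ))) (τ + h * 0)))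
      (-(1/2) * kap a (sqNorm z) τ + (1/4) * (z i ^ 2 * kap (a + 1) (sqNorm z) τ)) 0 := by
  have h1 : HasDerivAt (fun h : ℝ => (z + h • Pi.single i (1:ℝ) : Fin n → ℝ) i ^ 1) 1 0 := by
    simp only [pow_one, Pi.add_apply, Pi.smul_apply, Pi.single_eq_same, smul_eq_mul, mul_one]
    exact (hasDerivAt_id (0:ℝ)).const_add _
  have := (h1.mul (kap_dir a i z τ)).const_mul (-(1/2))
  refine this.congr_deriv ?_
  simp
  ring

theorem J_add (hδ : 0 < δ) (hO : IsOpen 𝒪) {f g : (Fin n → ℝ) → ℝ → ℝ} (hf : Ker f) (hg : Ker g)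
    {w : SpaceTime n → ℂ} (hw : Good 𝒪 T T₁ δ w) {p : SpaceTime n} (hp : p.1 ∈ 𝒪) (ht : -T < p.2) :
    J (fun z τ => f z τ + g z τ) w p = J f w p + J g w p := by
  unfold J
  rw [← integral_add (J_int hδ hO hf hw hp ht) (J_int hδ hO hg hw hp ht)]
  congr 1
  ext q
  push_cast
  ring

theorem J_smul (c : ℝ) (f : (Fin n → ℝ) → ℝ → ℝ) (w : SpaceTime n → ℂ) (p : SpaceTime n) :
    J (fun z τ => c * f z τ) w p = c * J f w p := by
  unfold J
  rw [← integral_const_mul]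
  congr 1
  ext q
  push_cast
  ring

theorem J_sum (hδ : 0 < δ) (hO : IsOpen 𝒪) {ι : Type*} (S : Finset ι)
    {f : ι → (Fin n → ℝ) → ℝ → ℝ} (hf : ∀ i, Ker (f i))
    {w : SpaceTime n → ℂ} (hw : Good 𝒪 T T₁ δ w) {p : SpaceTime n} (hp : p.1 ∈ 𝒪) (ht : -T < p.2) :
    J (fun z τ => ∑ i ∈ S, f i z τ) w p = ∑ i ∈ S, J (f i) w p := by
  unfold J
  rw [← integral_finsetSum _ (fun i _ => J_int hδ hO (hf i) hw hp ht)]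
  congr 1
  ext q
  push_cast
  rw [Finset.sum_mul]

theorem J_rec (hδ : 0 < δ) (hO : IsOpen 𝒪) {N : ℕ} {a : Fin N → ℝ} (ha : ∀ k, 0 ≤ a k)
    {w : Fin N → SpaceTime n → ℂ} (hw : ∀ k, Good 𝒪 T T₁ δ (w k)) (c : Fin N → ℂ)
    (hz : ∀ p : SpaceTime n, p.1 ∈ 𝒪 → p.2 ∈ Ioo (-T) T₁ →
      ∑ k, c k * J (fun z τ => kap (a k) (sqNorm z) τ) (w k) p = 0) :
    ∀ p : SpaceTime n, p.1 ∈ 𝒪 → p.2 ∈ Ioo (-T) T₁ →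
      ∑ k, (c k * ((a k - n / 2 : ℝ) : ℂ)) * J (fun z τ => kap (a k + 1) (sqNorm z) τ) (w k) p = 0 := by
  have ha1 : ∀ k, 0 ≤ a k + 1 := fun k => by linarith [ha k]
  have ha2 : ∀ k, 0 ≤ a k + 1 + 1 := fun k => by linarith [ha k]
  have hsp : ∀ i : Fin n, ∀ p : SpaceTime n, p.1 ∈ 𝒪 → p.2 ∈ Ioo (-T) T₁ →
      ∑ k, c k * J (fun z τ => -(1/2) * kap (a k + 1) (sqNorm z) τ +
        (1/4) * (z i ^ 2 * kap (a k + 1 + 1) (sqNorm z) τ)) (w k) p = 0 := by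
    intro i
    have s1 := J_step hδ hO (f' := fun k z τ => -(1/2) * (z i ^ 1 * kap (a k + 1) (sqNorm z) τ))
      (fun k => Ker.kap (ha k)) (fun k => (Ker.mono (ha1 k) i (by norm_num)).smul _)
      (Pi.single i 1, 0) (fun k z τ _ => kap_dir (a k) i z τ) hw c hz
    exact J_step hδ hO
      (fun k => (Ker.mono (ha1 k) i (by norm_num)).smul _)
      (fun k => ((Ker.kap (ha1 k)).smul _).add ((Ker.mono (ha2 k) i (by norm_num)).smul _))
      (Pi.single i 1, 0) (fun k z τ _ => kap_dir2 (a k + 1) i z τ) hw c s1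
  have htm := J_step hδ hO (f' := fun k z τ => -(a k) * kap (a k + 1) (sqNorm z) τ +
        ∑ i, (1/4) * (z i ^ 2 * kap (a k + 1 + 1) (sqNorm z) τ))
      (fun k => Ker.kap (ha k))
      (fun k => ((Ker.kap (ha1 k)).smul _).add
        (Ker.sum _ fun i => (Ker.mono (ha2 k) i (by norm_num)).smul _))
      (0, 1) (fun k z τ h => by
        have h1 := kap_hasDeriv_t (ha k) (sqNorm_nonneg z) (pos_aux h)
        have h3 : HasDerivAt (fun h : ℝ => τ + h * 1) 1 0 := by
          simpa using (hasDerivAt_id (0:ℝ)).const_add τ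
        have h2 := HasDerivAt.comp_of_eq (0:ℝ) h1 h3 (by simp)
        simp only [smul_zero, add_zero]
        refine h2.congr_deriv ?_
        rw [mul_one, ← Finset.mul_sum, ← Finset.sum_mul]
        rw [show a k + 1 + 1 = a k + 2 by ring]
        unfold sqNorm
        ring) hw c hz
  intro p hp ht
  have e1 := htm p hp ht
  have e2 : ∑ i : Fin n, ∑ k, c k * J (fun z τ => -(1/2) * kap (a k + 1) (sqNorm z) τ +
        (1/4) * (z i ^ 2 * kap (a k + 1 + 1) (sqNorm z) τ)) (w k) p = 0 :=
    Finset.sum_eq_zero fun i _ => hsp i p hp ht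
  rw [Finset.sum_comm, ← e1, eq_comm, ← sub_eq_zero, ← Finset.sum_sub_distrib] at e2
  rw [← neg_eq_zero, ← Finset.sum_neg_distrib, ← e2]
  refine Finset.sum_congr rfl fun k _ => ?_
  have i1 : ∀ i, J (fun z τ => -(1/2) * kap (a k + 1) (sqNorm z) τ +
        (1/4) * (z i ^ 2 * kap (a k + 1 + 1) (sqNorm z) τ)) (w k) p =
        (-(1/2) : ℝ) * J (fun z τ => kap (a k + 1) (sqNorm z) τ) (w k) p +
        J (fun z τ => (1/4) * (z i ^ 2 * kap (a k + 1 + 1) (sqNorm z) τ)) (w k) p := by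
    intro i
    rw [J_add hδ hO ((Ker.kap (ha1 k)).smul _) ((Ker.mono (ha2 k) i (by norm_num)).smul _) (hw k) hp ht.1,
      J_smul]
  have i2 : J (fun z τ => -(a k) * kap (a k + 1) (sqNorm z) τ +
        ∑ i, (1/4) * (z i ^ 2 * kap (a k + 1 + 1) (sqNorm z) τ)) (w k) p =
      (-(a k) : ℝ) * J (fun z τ => kap (a k + 1) (sqNorm z) τ) (w k) p +
      ∑ i, J (fun z τ => (1/4) * (z i ^ 2 * kap (a k + 1 + 1) (sqNorm z) τ)) (w k) p := by
    rw [J_add hδ hO ((Ker.kap (ha1 k)).smul _)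
      (Ker.sum _ fun i => (Ker.mono (ha2 k) i (by norm_num)).smul _) (hw k) hp ht.1,
      J_smul, J_sum hδ hO _ (fun i => (Ker.mono (ha2 k) i (by norm_num)).smul _) (hw k) hp ht.1]
  rw [i2]
  simp_rw [i1, mul_add, Finset.sum_add_distrib]
  simp only [Finset.sum_const, Finset.card_univ, Fintype.card_fin, nsmul_eq_mul, Finset.mul_sum]
  push_cast
  ring

theorem J_iter (hδ : 0 < δ) (hO : IsOpen 𝒪) {N : ℕ} {s : Fin N → ℝ} (hs : ∀ k, 0 < s k)
    {w : Fin N → SpaceTime n → ℂ} (hw : ∀ k, Good 𝒪 T T₁ δ (w k)) (b : Fin N → ℂ)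
    (hz : ∀ p : SpaceTime n, p.1 ∈ 𝒪 → p.2 ∈ Ioo (-T) T₁ →
      ∑ k, (b k * (Real.Gamma (1 + s k) : ℂ)) *
        J (fun z τ => kap (n / 2 + 1 + s k) (sqNorm z) τ) (w k) p = 0) (m : ℕ) :
    ∀ p : SpaceTime n, p.1 ∈ 𝒪 → p.2 ∈ Ioo (-T) T₁ →
      ∑ k, (b k * (Real.Gamma (1 + s k + m) : ℂ)) *
        J (fun z τ => kap (n / 2 + 1 + s k + m) (sqNorm z) τ) (w k) p = 0 := by
  induction m with
  | zero => simpa using hz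
  | succ m ih =>
    have := J_rec hδ hO (a := fun k => n / 2 + 1 + s k + m) (fun k => by have := hs k; positivity)
      hw _ ih
    intro p hp ht
    rw [← this p hp ht]
    refine Finset.sum_congr rfl fun k _ => ?_
    have e : (1 + s k + (m + 1 : ℕ) : ℝ) = (1 + s k + m) + 1 := by push_cast; ring
    rw [e, Real.Gamma_add_one (by have := hs k; positivity)]
    have e2 : (n / 2 + 1 + s k + (m + 1 : ℕ) : ℝ) = (n / 2 + 1 + s k + m) + 1 := by push_cast; ring
    rw [e2]
    push_cast
    ring

end rec

section semi
variable {n : ℕ} {𝒪 : Set (Fin n → ℝ)} {T T₁ δ : ℝ}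

theorem heatKernel_eq {τ : ℝ} (hτ : 0 < τ) (z : Fin n → ℝ) :
    heatKernel n τ z = (4 * π) ^ (-((n : ℝ) / 2)) * kap (n / 2) (sqNorm z) τ := by
  rw [kap_pos hτ]
  unfold heatKernel
  rw [Real.mul_rpow (by positivity) hτ.le, neg_div]
  ring

theorem J_eq (hδ : 0 < δ) (hO : IsOpen 𝒪) {w : SpaceTime n → ℂ} (hw : Good 𝒪 T T₁ δ w) {p : SpaceTime n}
    (hp : p.1 ∈ 𝒪) (ht : -T < p.2) {σ : ℝ} (hσ : 0 ≤ σ) :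
    J (fun z τ => kap (n / 2 + 1 + σ) (sqNorm z) τ) w p =
      (((4 * π) ^ ((n : ℝ) / 2) : ℝ) : ℂ) *
        ∫ τ in Ioi (0:ℝ), heatSemigroup n τ w p * ((τ ^ (-1 - σ) : ℝ) : ℂ) := by
  have hi := J_int hδ hO (Ker.kap (a := n / 2 + 1 + σ) (by positivity)) hw hp ht
  unfold J
  rw [Measure.volume_eq_prod] at hi ⊢
  rw [integral_prod_symm _ hi, ← integral_sub_left_eq_self _ volume p.2,
    ← setIntegral_eq_integral_of_forall_compl_eq_zero (s := Ioi (0:ℝ)), ← integral_const_mul]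
  · refine setIntegral_congr_fun measurableSet_Ioi fun τ hτ => ?_
    have hτ : 0 < τ := hτ
    simp only [heatSemigroup]
    rw [← integral_mul_const, ← integral_const_mul]
    congr 1
    ext y
    rw [heatKernel_eq hτ, sub_sub_cancel, kap_pos hτ, kap_pos hτ]
    have e1 : τ ^ (-((n : ℝ) / 2 + 1 + σ)) = τ ^ (-((n : ℝ) / 2)) * τ ^ (-1 - σ) := by
      rw [← Real.rpow_add hτ]; congr 1; ring
    have e2 : (4 * π) ^ ((n : ℝ) / 2) * (4 * π) ^ (-((n : ℝ) / 2)) = 1 := by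
      rw [← Real.rpow_add (by positivity), add_neg_cancel, Real.rpow_zero]
    have e2' : (((4 * π) ^ ((n : ℝ) / 2) : ℝ) : ℂ) * (((4 * π) ^ (-((n : ℝ) / 2)) : ℝ) : ℂ) = 1 := by
      exact_mod_cast e2
    rw [e1]
    simp only [Complex.ofReal_mul]
    linear_combination (-(((τ ^ (-((n : ℝ) / 2)) : ℝ) : ℂ) * ((τ ^ (-1 - σ) : ℝ) : ℂ) *
      ((Real.exp (-sqNorm (p.1 - y) / (4 * τ)) : ℝ) : ℂ) * w (y, p.2 - τ))) * e2'
  · intro τ hτ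
    have hτ : ¬ 0 < τ := hτ
    simp [kap_neg hτ]

theorem decay_integrable : Integrable (fun y : Fin n → ℝ => (1 + ‖y‖) ^ (-((n : ℝ) + 3))) :=
  integrable_one_add_norm (by simp)

theorem semi_pt (hO : IsOpen 𝒪) {w : SpaceTime n → ℂ} (hw : Good 𝒪 T T₁ δ w) {p : SpaceTime n}
    (hp : p.1 ∈ 𝒪) (ht : -T < p.2) :
    ∃ C c : ℝ, 0 < C ∧ 0 < c ∧ ∀ τ, 0 < τ → ∀ y,
      ‖(heatKernel n τ (p.1 - y) : ℂ) * w (y, p.2 - τ)‖ ≤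
        C * (1 + ‖y‖) ^ (-((n : ℝ) + 3)) * (Real.exp (-c / τ) * Real.exp (-δ * τ)) := by
  obtain ⟨r, τ0, hr, hτ0, hb, hτ2⟩ := radius_aux hO hp ht
  obtain ⟨M', -, hM'⟩ := dom_aux (Ker.kap (a := n / 2) (by positivity)) hw hr hb hτ0 hτ2
  obtain ⟨M, hM, hk⟩ := kap_bound (a := n / 2) (r := r ^ 2) (by positivity) (by positivity) hτ0
  obtain ⟨C, hC, hd⟩ := hw.decay
  refine ⟨(4 * π) ^ (-((n : ℝ) / 2)) * M * C * Real.exp (δ * p.2), r ^ 2 / 8, by positivity,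
    by positivity, fun τ hτ y => ?_⟩
  by_cases h0 : w (y, p.2 - τ) = 0
  · rw [h0, mul_zero, norm_zero]; positivity
  have hs := (hM' p (by simpa using hr.le) (by simpa using hτ0.le) (y, p.2 - τ)).2 h0
  simp only [sub_sub_cancel] at hs
  have hk' := hk (sqNorm (p.1 - y)) τ (sqNorm_nonneg _) hτ (hs.imp_left fun h => by
      refine le_trans ?_ (norm_sq_le_sqNorm _)
      gcongr)
  rw [norm_mul, Complex.norm_real, Real.norm_eq_abs, heatKernel_eq hτ, abs_mul,
    abs_of_nonneg (kap_nonneg _ _ _), abs_of_pos (by positivity)]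
  calc (4 * π) ^ (-((n : ℝ) / 2)) * kap (n / 2) (sqNorm (p.1 - y)) τ * ‖w (y, p.2 - τ)‖
      ≤ (4 * π) ^ (-((n : ℝ) / 2)) * (M * Real.exp (-(r ^ 2 / 8) / τ)) *
        (C * (1 + ‖y‖) ^ (-((n : ℝ) + 3)) * Real.exp (δ * (p.2 - τ))) := by
          gcongr
          exact hd _ _
    _ = _ := by
      rw [mul_sub, sub_eq_add_neg, Real.exp_add, neg_mul]
      ring

theorem semi_meas {w : SpaceTime n → ℂ} (hw : Measurable w) (p : SpaceTime n) (τ : ℝ) :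
    AEStronglyMeasurable (fun y => (heatKernel n τ (p.1 - y) : ℂ) * w (y, p.2 - τ)) volume := by
  apply Measurable.aestronglyMeasurable
  refine Measurable.mul ?_ (hw.comp (by fun_prop))
  apply Complex.measurable_ofReal.comp
  unfold heatKernel
  have := (sqNorm_continuous (n := n)).measurable
  fun_prop

theorem semi_bound (hO : IsOpen 𝒪) {w : SpaceTime n → ℂ} (hw : Good 𝒪 T T₁ δ w) {p : SpaceTime n}
    (hp : p.1 ∈ 𝒪) (ht : -T < p.2) :
    ∃ C c : ℝ, 0 < C ∧ 0 < c ∧ ∀ τ, 0 < τ →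
      ‖heatSemigroup n τ w p‖ ≤ C * Real.exp (-c / τ) * Real.exp (-δ * τ) := by
  obtain ⟨C, c, hC, hc, h⟩ := semi_pt hO hw hp ht
  have hI : 0 ≤ ∫ y : Fin n → ℝ, (1 + ‖y‖) ^ (-((n : ℝ) + 3)) :=
    integral_nonneg fun y => by positivity
  refine ⟨C * ((∫ y : Fin n → ℝ, (1 + ‖y‖) ^ (-((n : ℝ) + 3))) + 1), c, by positivity, hc,
    fun τ hτ => ?_⟩
  unfold heatSemigroup
  refine (norm_integral_le_of_norm_le ((decay_integrable.const_mul C).mul_const _)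
    (Filter.Eventually.of_forall (h τ hτ))).trans ?_
  rw [integral_mul_const, integral_const_mul, mul_assoc (C * _)]
  gcongr
  linarith

theorem semi_cont (hδ : 0 < δ) (hO : IsOpen 𝒪) {w : SpaceTime n → ℂ} (hw : Good 𝒪 T T₁ δ w)
    {p : SpaceTime n} (hp : p.1 ∈ 𝒪) (ht : p.2 ∈ Ioo (-T) T₁) :
    ContinuousOn (fun τ => heatSemigroup n τ w p) (Ioi 0) := by
  obtain ⟨C, c, hC, hc, h⟩ := semi_pt hO hw hp ht.1
  unfold heatSemigroup
  refine continuousOn_of_dominated (bound := fun y => C * (1 + ‖y‖) ^ (-((n : ℝ) + 3)))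
    (fun τ _ => semi_meas hw.meas p τ) (fun τ hτ => Filter.Eventually.of_forall fun y => ?_)
    (decay_integrable.const_mul C) (Filter.Eventually.of_forall fun y => ?_)
  · have hτ : 0 < τ := hτ
    refine (h τ hτ y).trans ?_
    have e1 : Real.exp (-c / τ) ≤ 1 := Real.exp_le_one_iff.2 (by
      rw [neg_div]
      have : 0 ≤ c / τ := by positivity
      linarith)
    have e2 : Real.exp (-δ * τ) ≤ 1 := Real.exp_le_one_iff.2 (by nlinarith)
    have e3 : Real.exp (-c / τ) * Real.exp (-δ * τ) ≤ 1 := mul_le_one₀ e1 (by positivity) e2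
    exact mul_le_of_le_one_right (by positivity) e3
  · apply ContinuousOn.mul
    · apply Complex.continuous_ofReal.comp_continuousOn
      unfold heatKernel
      intro τ hτ
      have hτ : 0 < τ := hτ
      apply ContinuousAt.continuousWithinAt
      refine ContinuousAt.mul ?_ ?_
      · refine ContinuousAt.rpow_const (by fun_prop) (Or.inl (by positivity))
      · refine Real.continuous_exp.continuousAt.comp (ContinuousAt.div (by fun_prop) (by fun_prop) (by positivity))
    · refine hw.cont.comp (by fun_prop) ?_
      intro τ hτ
      have hτ : 0 < τ := hτ
      simp only [mem_ofPred_eq]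
      linarith [ht.2]

theorem Gamma_neg_ne {s : ℝ} (h0 : 0 < s) (h1 : s < 1) : Real.Gamma (-s) ≠ 0 := by
  apply Real.Gamma_ne_zero
  intro m hm
  have : s = m := by linarith
  rw [this] at h0 h1
  have a : 0 < m := by exact_mod_cast h0
  have b : m < 1 := by exact_mod_cast h1
  omega

theorem semi_zero (hδ : 0 < δ) (hO : IsOpen 𝒪) {N : ℕ} {s : Fin N → ℝ} (hs0 : ∀ k, 0 < s k)
    (hs1 : ∀ k, s k < 1) (hinj : Function.Injective s)
    {w : Fin N → SpaceTime n → ℂ} (hw : ∀ k, Good 𝒪 T T₁ δ (w k))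
    (hz : ∀ p : SpaceTime n, p.1 ∈ 𝒪 → p.2 ∈ Ioo (-T) T₁ → ∑ k, fracHeat n (s k) (w k) p = 0)
    (p : SpaceTime n) (hp : p.1 ∈ 𝒪) (ht : p.2 ∈ Ioo (-T) T₁) (k : Fin N) (τ : ℝ) (hτ : 0 < τ) :
    heatSemigroup n τ (w k) p = 0 := by
  set A : ℂ := (((4 * π) ^ ((n : ℝ) / 2) : ℝ) : ℂ) with hA
  have hA0 : A ≠ 0 := by
    rw [hA]
    exact_mod_cast (show (0:ℝ) < (4 * π) ^ ((n : ℝ) / 2) by positivity).ne'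
  have hG : ∀ k, (Real.Gamma (1 + s k) : ℂ) ≠ 0 := fun k => by
    exact_mod_cast (Real.Gamma_pos_of_pos (by linarith [hs0 k])).ne'
  have hG' : ∀ k, (Real.Gamma (-s k) : ℂ) ≠ 0 := fun k => by
    exact_mod_cast Gamma_neg_ne (hs0 k) (hs1 k)
  set b : Fin N → ℂ := fun k => 1 / ((Real.Gamma (-s k) : ℂ) * (Real.Gamma (1 + s k) : ℂ)) with hb
  have hz' : ∀ p : SpaceTime n, p.1 ∈ 𝒪 → p.2 ∈ Ioo (-T) T₁ →
      ∑ k, (b k * (Real.Gamma (1 + s k) : ℂ)) *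
        J (fun z τ => kap (n / 2 + 1 + s k) (sqNorm z) τ) (w k) p = 0 := by
    intro p hp ht
    have := congrArg (A * ·) (hz p hp ht)
    simp only [mul_zero, Finset.mul_sum] at this
    rw [← this]
    refine Finset.sum_congr rfl fun k _ => ?_
    rw [J_eq hδ hO (hw k) hp ht.1 (hs0 k).le]
    unfold fracHeat
    rw [(hw k).van p.1 hp p.2 ht.1]
    simp only [sub_zero, hb]
    field_simp [hG k, hG' k]
    exact mul_comm _ _
  choose C c hC hc hbd using fun k => semi_bound hO (hw k) hp ht.1
  have hne : (Finset.univ : Finset (Fin N)).Nonempty := ⟨k, Finset.mem_univ k⟩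
  set c0 := Finset.univ.inf' hne c with hc0
  have hc0p : 0 < c0 := by rw [hc0, Finset.lt_inf'_iff]; exact fun k _ => hc k
  refine analytic_core hs0 hs1 hinj (b := b) (fun k => by
      rw [hb]; exact one_div_ne_zero (mul_ne_zero (hG' k) (hG k)))
    (F := fun k τ => heatSemigroup n τ (w k) p) (C := ∑ k, C k) (c := c0) (δ := δ)
    (Finset.sum_pos (fun k _ => hC k) hne) hc0p hδ (fun k => semi_cont hδ hO (hw k) hp ht)
    (fun k τ hτ => ?_) (fun m => ?_) k τ hτ
  · refine (hbd k τ hτ).trans ?_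
    have e1 : C k ≤ ∑ k, C k := Finset.single_le_sum (fun k _ => (hC k).le) (Finset.mem_univ k)
    have e2 : c0 ≤ c k := Finset.inf'_le _ (Finset.mem_univ k)
    have e3 : 0 ≤ ∑ k, C k := (hC k).le.trans e1
    gcongr
  · have := J_iter hδ hO hs0 hw b hz' m p hp ht
    have h2 : A * ∑ k, b k * (Real.Gamma (1 + s k + m) : ℂ) *
      ∫ τ in Ioi (0:ℝ), heatSemigroup n τ (w k) p * ((τ ^ (-1 - s k - m) : ℝ) : ℂ) = 0 := by
      rw [← this, Finset.mul_sum]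
      refine Finset.sum_congr rfl fun k _ => ?_
      have e : (n / 2 + 1 + s k + m : ℝ) = n / 2 + 1 + (s k + m) := by ring
      rw [e, J_eq hδ hO (hw k) hp ht.1 (by have := (hs0 k).le; positivity)]
      have e' : (-1 - (s k + m) : ℝ) = -1 - s k - m := by ring
      rw [e']
      ring
    exact (mul_eq_zero.1 h2).resolve_left hA0

end semi

section space
variable {n : ℕ}

/-- Euclidean dot product on `Fin n → ℝ`. -/
def dotp (x y : Fin n → ℝ) : ℝ := ∑ i, x i * y i

theorem dotp_continuous (x : Fin n → ℝ) : Continuous (dotp x) := by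
  unfold dotp; fun_prop

theorem sqNorm_shift (x ξ y : Fin n → ℝ) (ρ : ℝ) :
    sqNorm (x + ρ • ξ - y) = sqNorm (x - y) + 2 * ρ * dotp ξ x - 2 * ρ * dotp ξ y + ρ ^ 2 * sqNorm ξ := by
  unfold sqNorm dotp
  simp only [Finset.mul_sum, ← Finset.sum_add_distrib, ← Finset.sum_sub_distrib]
  refine Finset.sum_congr rfl fun i _ => ?_
  simp only [Pi.add_apply, Pi.sub_apply, Pi.smul_apply, smul_eq_mul]
  ring

theorem hk_shift {τ : ℝ} (hτ : 0 < τ) (x ξ y : Fin n → ℝ) (z : ℝ) :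
    heatKernel n τ (x + (2 * τ * z) • ξ - y) =
      heatKernel n τ (x - y) * Real.exp (z * dotp ξ y) *
        Real.exp (-(z * dotp ξ x + τ * z ^ 2 * sqNorm ξ)) := by
  unfold heatKernel
  set A := (4 * π * τ) ^ (-(n : ℝ) / 2)
  rw [sqNorm_shift, mul_assoc A, ← Real.exp_add, mul_assoc A, ← Real.exp_add]
  congr 2
  field_simp
  ring

theorem hk_pos {τ : ℝ} (hτ : 0 < τ) (x : Fin n → ℝ) : 0 < heatKernel n τ x := by
  unfold heatKernel; positivity

theorem hk_le {τ : ℝ} (hτ : 0 < τ) (x : Fin n → ℝ) :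
    heatKernel n τ x ≤ (4 * π * τ) ^ (-(n : ℝ) / 2) := by
  unfold heatKernel
  apply mul_le_of_le_one_right (by positivity)
  apply Real.exp_le_one_iff.2
  rw [neg_div]
  have := sqNorm_nonneg x
  have : 0 ≤ sqNorm x / (4 * τ) := by positivity
  linarith

theorem hk_cont {τ : ℝ} (x : Fin n → ℝ) : Continuous (fun y => heatKernel n τ (x - y)) := by
  unfold heatKernel
  have := sqNorm_continuous (n := n)
  fun_prop

theorem hk_exp_le {τ : ℝ} (hτ : 0 < τ) (x ξ : Fin n → ℝ) :
    ∃ K : ℝ, ∀ y, heatKernel n τ (x - y) * Real.exp (1 * |dotp ξ y|) ≤ K := by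
  set A := (4 * π * τ) ^ (-(n : ℝ) / 2)
  have key : ∀ z : ℝ, ∀ y, heatKernel n τ (x - y) * Real.exp (z * dotp ξ y) ≤
      A * Real.exp (z * dotp ξ x + τ * z ^ 2 * sqNorm ξ) := by
    intro z y
    have h1 := hk_shift hτ x ξ y z
    have h2 := hk_le hτ (x + (2 * τ * z) • ξ - y)
    rw [h1, Real.exp_neg, ← div_eq_mul_inv, div_le_iff₀ (Real.exp_pos _)] at h2
    exact h2
  refine ⟨A * Real.exp (1 * dotp ξ x + τ * 1 ^ 2 * sqNorm ξ) +
    A * Real.exp ((-1) * dotp ξ x + τ * (-1) ^ 2 * sqNorm ξ), fun y => ?_⟩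
  have hA : 0 < A := by positivity
  rcases le_total 0 (dotp ξ y) with h | h
  · rw [abs_of_nonneg h]
    have := key 1 y
    have h2 : 0 < A * Real.exp ((-1) * dotp ξ x + τ * (-1) ^ 2 * sqNorm ξ) := by positivity
    linarith
  · rw [abs_of_nonpos h]
    have := key (-1) y
    have h2 : 0 < A * Real.exp (1 * dotp ξ x + τ * 1 ^ 2 * sqNorm ξ) := by positivity
    rw [show 1 * -dotp ξ y = -1 * dotp ξ y by ring]
    linarith

open scoped Topology in
theorem space_zero {𝒪 : Set (Fin n → ℝ)} (hO : IsOpen 𝒪) (hne : 𝒪.Nonempty) {τ : ℝ} (hτ : 0 < τ)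
    {f : (Fin n → ℝ) → ℂ} (hf : Continuous f) (hi : Integrable f)
    (h : ∀ x ∈ 𝒪, ∫ y, (heatKernel n τ (x - y) : ℂ) * f y = 0) (y : Fin n → ℝ) : f y = 0 := by
  obtain ⟨x, hx⟩ := hne
  set g : (Fin n → ℝ) → ℂ := fun y => (heatKernel n τ (x - y) : ℂ) * f y with hg
  have hgc : Continuous g := (Complex.continuous_ofReal.comp (hk_cont x)).mul hf
  have hgint : ∀ ξ, Integrable (fun y => ‖g y‖ * Real.exp (1 * |dotp ξ y|)) := by
    intro ξ
    obtain ⟨K, hK⟩ := hk_exp_le hτ x ξ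
    refine (hi.norm.const_mul K).mono' ?_ (Filter.Eventually.of_forall fun y => ?_)
    · have := dotp_continuous ξ
      exact Continuous.aestronglyMeasurable (by fun_prop)
    · rw [Real.norm_eq_abs, abs_of_nonneg (by positivity), hg]
      simp only [norm_mul, Complex.norm_real, Real.norm_eq_abs]
      rw [abs_of_pos (hk_pos hτ _)]
      calc _ = (heatKernel n τ (x - y) * Real.exp (1 * |dotp ξ y|)) * ‖f y‖ := by ring
        _ ≤ _ := by gcongr; exact hK y
  have hg0 : Integrable g := by
    refine (hgint 0).mono' hgc.aestronglyMeasurable (Filter.Eventually.of_forall fun y => ?_)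
    simp [dotp]
  have hF : ∀ ξ, ∫ y, g y * Complex.exp (Complex.I * (dotp ξ y : ℂ)) = 0 := by
    intro ξ
    refine expT_zero one_pos hgc.aestronglyMeasurable (dotp_continuous ξ).measurable.aemeasurable
      (hgint ξ) ?_ Complex.I (by simp)
    refine freq_of_real (f := fun z => ∫ y, g y * Complex.exp (z * (dotp ξ y : ℂ))) ?_
    have hS : {z : ℝ | x + (2 * τ * z) • ξ ∈ 𝒪} ∈ 𝓝 (0:ℝ) := by
      apply IsOpen.mem_nhds
      · exact hO.preimage (by fun_prop)
      · simpa using hx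
    filter_upwards [nhdsWithin_le_nhds hS] with z hz
    have := h _ hz
    have e : ∀ y, (heatKernel n τ (x + (2 * τ * z) • ξ - y) : ℂ) * f y =
        (Real.exp (-(z * dotp ξ x + τ * z ^ 2 * sqNorm ξ)) : ℂ) *
          (g y * Complex.exp ((z : ℂ) * (dotp ξ y : ℂ))) := by
      intro y
      rw [hk_shift hτ]
      simp only [hg, Complex.ofReal_mul, Complex.ofReal_exp]
      ring
    simp_rw [e] at this
    rw [integral_const_mul] at this
    refine (mul_eq_zero.1 this).resolve_left ?_
    exact_mod_cast (Real.exp_pos _).ne'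
  have hmp := PiLp.volume_preserving_ofLp (Fin n)
  have hemb : MeasurableEmbedding (@WithLp.ofLp 2 (Fin n → ℝ)) :=
    (MeasurableEquiv.toLp 2 (Fin n → ℝ)).symm.measurableEmbedding
  have hz := fourier_unique (V := EuclideanSpace ℝ (Fin n)) (f := fun v => g v.ofLp)
    (hmp.integrable_comp_of_integrable hg0) (fun ξ => by
      have h1 := hF ξ.ofLp
      rw [← hmp.integral_comp hemb] at h1
      rw [← h1]
      congr 1) (WithLp.toLp 2 y) (by
      apply Continuous.continuousAt
      exact hgc.comp (PiLp.continuous_ofLp 2 _))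
  simp only [hg] at hz
  refine (mul_eq_zero.1 hz).resolve_left ?_
  exact_mod_cast (hk_pos hτ _).ne'

end space

section fin
variable {n : ℕ}

theorem Dmixed_zero (v : SpaceTime n → ℂ) : Dmixed n 0 (fun _ => 0) v = v := by
  unfold Dmixed
  simp

theorem decay_aux {a C0 C1 : ℝ} (ha : 0 ≤ a) (x : Fin n → ℝ) (h0 : a ≤ C0) (h1 : ‖x‖ ^ (n + 3) * a ≤ C1) :
    a ≤ 2 ^ (n + 3) * (|C0| + |C1|) * (1 + ‖x‖) ^ (-((n : ℝ) + 3)) := by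
  have hx : 0 < 1 + ‖x‖ := by positivity
  have e : (1 + ‖x‖) ^ (-((n : ℝ) + 3)) = ((1 + ‖x‖) ^ (n + 3))⁻¹ := by
    rw [Real.rpow_neg hx.le, ← Real.rpow_natCast]
    push_cast
    rfl
  rw [e, ← div_eq_mul_inv, le_div_iff₀ (by positivity)]
  have h2 : (1 + ‖x‖) ^ (n + 3) ≤ 2 ^ (n + 3) * (1 + ‖x‖ ^ (n + 3)) := by
    have := add_pow_le (zero_le_one (α := ℝ)) (norm_nonneg x) (n + 3)
    rw [one_pow] at this
    refine this.trans ?_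
    gcongr
    · norm_num
    · omega
  calc a * (1 + ‖x‖) ^ (n + 3) ≤ a * (2 ^ (n + 3) * (1 + ‖x‖ ^ (n + 3))) := by gcongr
    _ = 2 ^ (n + 3) * (a + ‖x‖ ^ (n + 3) * a) := by ring
    _ ≤ _ := by
      gcongr
      · exact h0.trans (le_abs_self _)
      · exact h1.trans (le_abs_self _)

theorem good_cut {𝒪 : Set (Fin n → ℝ)} {T T₁ δ : ℝ} (hδ : 0 < δ) (h2 : T₁ < T)
    {v : SpaceTime n → ℂ} (hreg : SmoothSchwartzUpTo n T v) {C : ℝ} (hC : 0 < C)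
    {φ : SchwartzMap (Fin n → ℝ) ℝ}
    (hd : ∀ (x : Fin n → ℝ) (t : ℝ), t ≤ -T → ‖v (x, t)‖ ≤ C * |φ x| * Real.exp (δ * t))
    (hv : ∀ x ∈ 𝒪, ∀ t ∈ Ioo (-T) T, v (x, t) = 0) :
    Good 𝒪 T T₁ δ (indicator {p : SpaceTime n | p.2 < T₁} v) := by
  classical
  have hS : IsOpen {p : SpaceTime n | p.2 < T₁} := isOpen_lt continuous_snd continuous_const
  have hcv : ContinuousOn v {p : SpaceTime n | p.2 < T₁} :=
    hreg.1.continuousOn.mono fun p (hp : p.2 < T₁) => hp.trans h2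
  refine ⟨?_, ?_, ?_, ?_, ?_⟩
  · rw [← piecewise_eq_indicator]
    exact hcv.measurable_piecewise continuousOn_const hS.measurableSet
  · exact hcv.congr fun p hp => indicator_of_mem hp v
  · obtain ⟨A0, hA0, hφ0⟩ := φ.decay 0 0
    obtain ⟨A1, hA1, hφ1⟩ := φ.decay (n + 3) 0
    obtain ⟨B0, hB0⟩ := hreg.2 0 (fun _ => 0) 0 (-T) T₁ h2
    obtain ⟨B1, hB1⟩ := hreg.2 0 (fun _ => 0) (n + 3) (-T) T₁ h2
    simp only [norm_iteratedFDeriv_zero, Dmixed_zero, pow_zero, one_mul] at hφ0 hφ1 hB0 hB1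
    refine ⟨C * (2 ^ (n + 3) * (|A0| + |A1|)) + 2 ^ (n + 3) * (|B0| + |B1|) * Real.exp (δ * T),
      by positivity, fun y t => ?_⟩
    by_cases ht : t < T₁
    swap
    · rw [indicator_of_notMem (by exact ht), norm_zero]; positivity
    rw [indicator_of_mem (by exact ht)]
    rcases le_total t (-T) with h | h
    · calc ‖v (y, t)‖ ≤ C * |φ y| * Real.exp (δ * t) := hd y t h
        _ ≤ C * (2 ^ (n + 3) * (|A0| + |A1|) * (1 + ‖y‖) ^ (-((n : ℝ) + 3))) * Real.exp (δ * t) := by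
          gcongr
          exact decay_aux (abs_nonneg _) y (hφ0 y) (hφ1 y)
        _ = (C * (2 ^ (n + 3) * (|A0| + |A1|))) * (1 + ‖y‖) ^ (-((n : ℝ) + 3)) * Real.exp (δ * t) := by
          ring
        _ ≤ _ := by
          gcongr
          have : 0 ≤ 2 ^ (n + 3) * (|B0| + |B1|) * Real.exp (δ * T) := by positivity
          linarith
    · have e1 := decay_aux (norm_nonneg _) y (hB0 y t h ht.le) (hB1 y t h ht.le)
      have e2 : 1 ≤ Real.exp (δ * T) * Real.exp (δ * t) := by
        rw [← Real.exp_add]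
        apply Real.one_le_exp
        nlinarith
      calc ‖v (y, t)‖ ≤ 2 ^ (n + 3) * (|B0| + |B1|) * (1 + ‖y‖) ^ (-((n : ℝ) + 3)) * 1 := by
            rw [mul_one]; exact e1
        _ ≤ 2 ^ (n + 3) * (|B0| + |B1|) * (1 + ‖y‖) ^ (-((n : ℝ) + 3)) *
            (Real.exp (δ * T) * Real.exp (δ * t)) := by gcongr
        _ = (2 ^ (n + 3) * (|B0| + |B1|) * Real.exp (δ * T)) * (1 + ‖y‖) ^ (-((n : ℝ) + 3)) *
            Real.exp (δ * t) := by ring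
        _ ≤ _ := by
          gcongr
          have : 0 ≤ C * (2 ^ (n + 3) * (|A0| + |A1|)) := by positivity
          linarith
  · intro x hx t ht
    by_cases h : t < T₁
    · rw [indicator_of_mem (by exact h)]
      exact hv x hx t ⟨ht, h.trans h2⟩
    · rw [indicator_of_notMem (by exact h)]
  · intro x t ht
    rw [indicator_of_notMem (by exact not_lt.2 ht)]

theorem fracHeat_cut {T₁ s : ℝ} (v : SpaceTime n → ℂ) (p : SpaceTime n) (hp : p.2 < T₁) :
    fracHeat n s (indicator {p : SpaceTime n | p.2 < T₁} v) p = fracHeat n s v p := by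
  unfold fracHeat
  congr 1
  refine setIntegral_congr_fun measurableSet_Ioi fun τ hτ => ?_
  have hτ : 0 < τ := hτ
  rw [indicator_of_mem (by exact hp)]
  congr 2
  unfold heatSemigroup
  congr 1
  ext y
  rw [indicator_of_mem]
  show p.2 - τ < T₁
  linarith

end fin

theorem entanglement_principle_smooth
    (n : ℕ) (hn : 2 ≤ n)
    (𝒪 : Set (Fin n → ℝ)) (h𝒪open : IsOpen 𝒪) (h𝒪ne : 𝒪.Nonempty)
    (N : ℕ) (hN : 1 ≤ N) (T : ℝ) (hT : 0 < T)
    (s : Fin N → ℝ) (hs0 : ∀ k, 0 < s k) (hs1 : ∀ k, s k < 1) (hsmono : StrictMono s)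
    (v : Fin N → SpaceTime n → ℂ)
    (hreg : ∀ k, SmoothSchwartzUpTo n T (v k))
    (δ : ℝ) (hδ : 0 < δ)
    -- decay for `|β| = 0`: `|v_k(x,t)| ≤ C₀ |φ₀(x)| e^{δ t}` for `t ≤ -T`
    (hdecay0 : ∃ C : ℝ, 0 < C ∧ ∃ φ : SchwartzMap (Fin n → ℝ) ℝ,
      ∀ k, ∀ (x : Fin n → ℝ) (t : ℝ), t ≤ -T →
        ‖v k (x, t)‖ ≤ C * |φ x| * Real.exp (δ * t))
    -- decay for `|β| ≥ 1`: `|D^β v_k(x,t)| ≤ C_β |φ_β(x)|` for `t ≤ -T`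
    (hdecay : ∀ (β0 : ℕ) (β : Fin n → ℕ), 1 ≤ β0 + ∑ i, β i →
      ∃ C : ℝ, 0 < C ∧ ∃ φ : SchwartzMap (Fin n → ℝ) ℝ,
        ∀ k, ∀ (x : Fin n → ℝ) (t : ℝ), t ≤ -T →
          ‖Dmixed n β0 β (v k) (x, t)‖ ≤ C * |φ x|)
    -- each `v_k` vanishes on `𝒪 × (-T,T)`
    (hvanish : ∀ k, ∀ x ∈ 𝒪, ∀ t ∈ Ioo (-T) T, v k (x, t) = 0)
    -- `∑ₖ 𝓗^{s_k} v_k = 0` on `𝒪 × (-T,T)`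
    (hsum : ∀ x ∈ 𝒪, ∀ t ∈ Ioo (-T) T, ∑ k, fracHeat n (s k) (v k) (x, t) = 0) :
    ∀ k, ∀ x : Fin n → ℝ, ∀ t ∈ Ioo (-T) T, v k (x, t) = 0 := by
  intro k x t ht
  obtain ⟨C, hC, φ, hd⟩ := hdecay0
  set T₁ := (t + T) / 2 with hT₁
  have h1 : t < T₁ := by rw [hT₁]; linarith [ht.2]
  have h2 : T₁ < T := by rw [hT₁]; linarith [ht.2]
  set w : Fin N → SpaceTime n → ℂ := fun k => indicator {p : SpaceTime n | p.2 < T₁} (v k) with hw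
  have hgood : ∀ k, Good 𝒪 T T₁ δ (w k) := fun k =>
    good_cut hδ h2 (hreg k) hC (hd k) (hvanish k)
  set t' := (t + T₁) / 2 with ht'
  have h3 : t < t' := by rw [ht']; linarith
  have h4 : t' < T₁ := by rw [ht']; linarith
  have hzero := semi_zero hδ h𝒪open hs0 hs1 hsmono.injective hgood (fun p hp hpt => by
    rw [← hsum p.1 hp p.2 ⟨hpt.1, hpt.2.trans h2⟩]
    exact Finset.sum_congr rfl fun k _ => fracHeat_cut (v k) p hpt.2)
  have hfin : w k (x, t) = 0 := by
    have hcont : Continuous (fun y => w k (y, t)) := by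
      rw [← continuousOn_univ]
      exact (hgood k).cont.comp (by fun_prop) (fun y _ => h1)
    refine space_zero (f := fun y => w k (y, t)) h𝒪open h𝒪ne (sub_pos.2 h3) hcont ?_ (fun x' hx' => ?_) x
    · obtain ⟨C', hC', hd'⟩ := (hgood k).decay
      exact ((decay_integrable.const_mul C').mul_const (Real.exp (δ * t))).mono'
        hcont.aestronglyMeasurable (Filter.Eventually.of_forall fun y => hd' y t)
    · have := hzero (x', t') hx' ⟨ht.1.trans h3, h4⟩ k (t' - t) (sub_pos.2 h3)
      simpa [heatSemigroup] using this
  rw [← hfin, hw]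
  simp only
  rw [indicator_of_mem (by exact h1)]

end
end
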